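/- arXiv:2102.13135 — 2 statements merged into one kernel-verified Lean document; each statement's English description precedes it below -/
import Mathlib

section
/- Let F be the adjacency matrix of a graph on N nodes drawn from SSBM(N,K,p,q) conditional on a community assignment matrix Y, and let b_1,…,b_M ∈ {0,1}^N be pairwise disjoint measurement vectors (b_i·b_j = 0 for i ≠ j) that are r-homogeneous, i.e. |supp(b_i)| = r for all i. Let B be the M×N matrix with rows b_i, let C = B F Bᵀ, and let a_i = b_i Yᵀ be the i-th row of the profile matrix A = B Yᵀ. Then the entries {C_{ij} : i > j} are mutually independent random variables, and for each i > j the law of C_{ij} is PoissonBinomial({p}^{a_i·a_j}, {q}^{r² − a_i·a_j}), i.e. the law of a sum of r² independent Bernoulli random variables of which a_i·a_j have success probability p and r² − a_i·a_j have success probability q. -/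
open MeasureTheory ProbabilityTheory
open scoped ENNReal NNReal

/-- Law (on `ℕ`, via the indicator `true ↦ 1`) of a Bernoulli random variable with
success probability `p`. -/
noncomputable def bernNat (p : ℝ≥0∞) (hp : p ≤ 1) : PMF ℕ :=
  (PMF.ofFintype (fun b : Bool => cond b p (1 - p)) (by simp [hp])).map fun b => if b then 1 else 0

/-- Law of the sum of `n` independent copies of an `ℕ`-valued random variable with law `μ`. -/
noncomputable def iidSum (μ : PMF ℕ) : ℕ → PMF ℕ
  | 0 => PMF.pure 0
  | n + 1 => (iidSum μ n).bind fun s => μ.map fun x => s + x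

/-- Poisson binomial law `PoissonBinomial({p}^m, {q}^k)`: the law of the sum of `m + k`
independent Bernoulli random variables, `m` of them with success probability `p` and
`k` of them with success probability `q`. -/
noncomputable def poissonBinomial (p q : ℝ≥0∞) (hp : p ≤ 1) (hq : q ≤ 1) (m k : ℕ) : PMF ℕ :=
  (iidSum (bernNat p hp) m).bind fun s => (iidSum (bernNat q hq) k).map fun t => s + t

/-!
The entry `C i j` is the sum of `F` over the edges joining the supports of `b i` and `b j`. Since
these supports are pairwise disjoint, distinct unordered pairs `{i, j}` use disjoint sets of edges,
so the entries are functions of disjoint blocks of an independent family. There are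
`|supp (b i)| * |supp (b j)|` such edges, and, as `Yᵀ * Y` is the indicator matrix of being in
the same community, `(A * Aᵀ) i j = (B * (Yᵀ * Y) * Bᵀ) i j` counts those of them that lie inside a
community.
-/

section Independence

variable {ι κ Ω : Type*} {mΩ : MeasurableSpace Ω} {μ : Measure Ω}

theorem iIndep_iSup_of_pairwise_disjoint {m : ι → MeasurableSpace Ω} (h_le : ∀ i, m i ≤ mΩ)
    (hm : iIndep m μ) {S : κ → Set ι} (hS : Pairwise (Function.onFun Disjoint S)) :
    iIndep (fun k => ⨆ i ∈ S k, m i) μ := by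
  classical
  have := hm.isProbabilityMeasure
  rw [iIndep_iff]
  intro s A hA
  induction s using Finset.induction_on with
  | empty => simp
  | insert a s ha ih =>
    have hmeas : ∀ k ∈ s, MeasurableSet[⨆ i ∈ ⋃ k ∈ s, S k, m i] (A k) := fun k hk =>
      (biSup_mono fun _ hi => Set.mem_biUnion hk hi : _ ≤ ⨆ i ∈ ⋃ k ∈ s, S k, m i) _
        (hA k (Finset.mem_insert_of_mem hk))
    have hdisj : Disjoint (S a) (⋃ k ∈ s, S k) :=
      Set.disjoint_iUnion₂_right.2 fun k hk => hS (ne_of_mem_of_not_mem hk ha).symm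
    have hindep := (Indep_iff _ _ _).1 (indep_iSup_of_disjoint h_le hm hdisj) (A a) (⋂ k ∈ s, A k)
      (hA a (Finset.mem_insert_self a s)) (Finset.measurableSet_biInter s hmeas)
    rw [Finset.set_biInter_insert, hindep, Finset.prod_insert ha,
      ih fun k hk => hA k (Finset.mem_insert_of_mem hk)]

variable {M : Type*} [AddCommMonoid M] [MeasurableSpace M] [MeasurableAdd₂ M] {X : ι → Ω → M}

theorem iIndepFun_sum_of_pairwise_disjoint (hX : ∀ i, Measurable (X i)) (hI : iIndepFun X μ)
    {S : κ → Finset ι} (hS : Pairwise (Function.onFun Disjoint S)) :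
    iIndepFun (fun k ω => ∑ i ∈ S k, X i ω) μ := by
  have hblocks := iIndep_iSup_of_pairwise_disjoint (fun i => (hX i).comap_le) hI
    (S := fun k => (S k : Set ι)) fun _ _ hkl => Finset.disjoint_coe.2 (hS hkl)
  refine iIndep_of_iIndep_of_le hblocks fun k => Measurable.comap_le ?_
  refine Finset.measurable_fun_sum (S k) fun i hi => ?_
  exact (comap_measurable (X i)).mono
    (le_biSup (fun i => MeasurableSpace.comap (X i) _) (Finset.mem_coe.2 hi)) le_rfl

theorem indepFun_sum_sum_of_disjoint (hX : ∀ i, Measurable (X i)) (hI : iIndepFun X μ)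
    {S T : Finset ι} (hST : Disjoint S T) :
    IndepFun (fun ω => ∑ i ∈ S, X i ω) (fun ω => ∑ i ∈ T, X i ω) μ := by
  have hcomp := (hI.indepFun_finset S T hST hX).comp
    (φ := fun x => ∑ i, x i) (ψ := fun x => ∑ i, x i) (by fun_prop) (by fun_prop)
  convert hcomp using 2 <;> exact (Finset.sum_coe_sort _ fun i => X i _).symm

end Independence

section Laws

variable {M : Type*} [AddMonoid M] [MeasurableSpace M] [Countable M] [DiscreteMeasurableSpace M]

theorem toMeasure_bind_map_add (ν ρ : PMF M) :
    (ν.bind fun s => ρ.map fun t => s + t).toMeasure = ν.toMeasure ∗ ρ.toMeasure := by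
  ext A hA
  rw [Measure.conv, Measure.map_apply measurable_add hA, Measure.prod_apply (measurable_add hA),
    lintegral_countable', PMF.toMeasure_bind_apply _ _ _ hA]
  refine tsum_congr fun s => ?_
  rw [PMF.toMeasure_apply_singleton _ _ (.singleton s), mul_comm,
    PMF.toMeasure_map_apply _ _ _ .of_discrete hA]
  rfl

variable {ι Ω : Type*} [MeasurableSpace Ω] {μ : Measure Ω}

theorem map_add_eq_toMeasure_bind [IsFiniteMeasure μ] {X Z : Ω → M}
    (hX : Measurable X) (hZ : Measurable Z) (hXZ : IndepFun X Z μ) {ν ρ : PMF M}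
    (hν : μ.map X = ν.toMeasure) (hρ : μ.map Z = ρ.toMeasure) :
    μ.map (fun ω => X ω + Z ω) = (ν.bind fun s => ρ.map fun t => s + t).toMeasure := by
  rw [toMeasure_bind_map_add, ← hν, ← hρ, ← hXZ.map_add_eq_map_conv_map hX hZ]
  rfl

variable {X : ι → Ω → ℕ}

theorem map_sum_eq_toMeasure_iidSum (hX : ∀ i, Measurable (X i)) (hI : iIndepFun X μ)
    {ν : PMF ℕ} {S : Finset ι} (hS : ∀ i ∈ S, μ.map (X i) = ν.toMeasure) :
    μ.map (fun ω => ∑ i ∈ S, X i ω) = (iidSum ν S.card).toMeasure := by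
  classical
  have := hI.isProbabilityMeasure
  induction S using Finset.induction_on with
  | empty => simp [iidSum, PMF.toMeasure_pure]
  | insert a S ha ih =>
    have hindep := indepFun_sum_sum_of_disjoint hX hI (Finset.disjoint_singleton_right.2 ha)
    simp only [Finset.sum_singleton] at hindep
    simp only [Finset.sum_insert ha, Finset.card_insert_of_notMem ha, iidSum, add_comm (X a _)]
    exact map_add_eq_toMeasure_bind (by fun_prop) (hX a) hindep
      (ih fun i hi => hS i (Finset.mem_insert_of_mem hi)) (hS a (Finset.mem_insert_self a S))

theorem map_sum_eq_toMeasure_poissonBinomial (hX : ∀ i, Measurable (X i)) (hI : iIndepFun X μ)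
    {p q : ℝ≥0∞} {hp : p ≤ 1} {hq : q ≤ 1} {P : ι → Prop} [DecidablePred P] {S : Finset ι}
    (hS : ∀ i ∈ S, μ.map (X i) = (if P i then bernNat p hp else bernNat q hq).toMeasure) :
    μ.map (fun ω => ∑ i ∈ S, X i ω) =
      (poissonBinomial p q hp hq (S.filter P).card (S.filter fun i => ¬ P i).card).toMeasure := by
  have := hI.isProbabilityMeasure
  have hlaw_p : ∀ i ∈ S.filter P, μ.map (X i) = (bernNat p hp).toMeasure := fun i hi => by
    rw [hS i (Finset.mem_of_mem_filter i hi), if_pos (Finset.mem_filter.1 hi).2]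
  have hlaw_q : ∀ i ∈ S.filter fun i => ¬ P i, μ.map (X i) = (bernNat q hq).toMeasure :=
    fun i hi => by
      rw [hS i (Finset.mem_of_mem_filter i hi), if_neg (Finset.mem_filter.1 hi).2]
  simp only [← Finset.sum_filter_add_sum_filter_not S P]
  exact map_add_eq_toMeasure_bind (by fun_prop) (by fun_prop)
    (indepFun_sum_sum_of_disjoint hX hI (Finset.disjoint_filter_filter_not S S P))
    (map_sum_eq_toMeasure_iidSum hX hI hlaw_p) (map_sum_eq_toMeasure_iidSum hX hI hlaw_q)

end Laws

section CrossEdges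

variable {ι V : Type*} [LinearOrder V] [Fintype V]

/-- The edges, as increasing pairs, with one endpoint in `S` and the other in `T`. -/
def crossEdges (S T : Finset V) : Finset {e : V × V // e.1 < e.2} :=
  {e | (e.1.1 ∈ S ∧ e.1.2 ∈ T) ∨ (e.1.2 ∈ S ∧ e.1.1 ∈ T)}

@[simp]
theorem mem_crossEdges {S T : Finset V} {e : {e : V × V // e.1 < e.2}} :
    e ∈ crossEdges S T ↔ (e.1.1 ∈ S ∧ e.1.2 ∈ T) ∨ (e.1.2 ∈ S ∧ e.1.1 ∈ T) := by
  simp [crossEdges]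

theorem pairwise_disjoint_crossEdges [LinearOrder ι] {S : ι → Finset V}
    (hS : Pairwise (Function.onFun Disjoint S)) :
    Pairwise (Function.onFun Disjoint fun e : {e : ι × ι // e.2 < e.1} =>
      crossEdges (S e.1.1) (S e.1.2)) := by
  have hunique : ∀ {i j u}, u ∈ S i → u ∈ S j → i = j := fun hi hj =>
    hS.eq (Finset.not_disjoint_iff.2 ⟨_, hi, hj⟩)
  rintro ⟨⟨i, j⟩, hji⟩ ⟨⟨k, l⟩, hlk⟩ hne
  refine Finset.disjoint_left.2 fun e he he' => hne ?_
  grind [mem_crossEdges]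

theorem sum_crossEdges {M : Type*} [AddCommMonoid M] {S T : Finset V} (hST : Disjoint S T)
    {f : V → V → M} (hf : ∀ u v, f u v = f v u) :
    ∑ e ∈ crossEdges S T, f e.1.1 e.1.2 = ∑ u ∈ S, ∑ v ∈ T, f u v := by
  rw [← Finset.sum_product']
  have hnot : ∀ {u}, u ∈ S → u ∉ T := fun h => Finset.disjoint_left.1 hST h
  refine Finset.sum_nbij (fun e => if e.1.1 ∈ S then e.1 else e.1.swap) ?_ ?_ ?_ ?_
  · grind [mem_crossEdges]
  · rintro ⟨⟨u, v⟩, huv⟩ _ ⟨⟨u', v'⟩, huv'⟩ _ heq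
    grind
  · rintro ⟨u, v⟩ huv
    obtain ⟨hu, hv⟩ := Finset.mem_product.1 huv
    have hvS : v ∉ S := Finset.disjoint_right.1 hST hv
    rcases lt_or_gt_of_ne (ne_of_mem_of_not_mem hu hvS) with hlt | hgt
    · exact ⟨⟨(u, v), hlt⟩, by simp [hu, hv], by simp [hu]⟩
    · exact ⟨⟨(v, u), hgt⟩, by simp [hu, hv], by simp [hvS]⟩
  · grind [mem_crossEdges]

theorem card_crossEdges {S T : Finset V} (hST : Disjoint S T) :
    (crossEdges S T).card = S.card * T.card := by
  simpa using sum_crossEdges (M := ℕ) hST (f := fun _ _ => 1) fun _ _ => rfl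

end CrossEdges

section Matrices

open Matrix

variable {ι κ V R : Type*}

theorem transpose_mul_self_apply_eq_ite [Fintype κ] [NonAssocSemiring R] {Y : Matrix κ V R}
    (hY : ∀ k u, Y k u = 0 ∨ Y k u = 1) (hYcol : ∀ u k l, Y k u = 1 → Y l u = 1 → k = l)
    (u v : V) [Decidable (∃ k, Y k u = 1 ∧ Y k v = 1)] :
    (Yᵀ * Y) u v = if ∃ k, Y k u = 1 ∧ Y k v = 1 then 1 else 0 := by
  rw [mul_apply]
  split_ifs with hsame
  · obtain ⟨k, hu, hv⟩ := hsame
    rw [Finset.sum_eq_single k]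
    · simp [hu, hv]
    · intro l _ hlk
      have hlu : Y l u = 0 := (hY l u).resolve_right fun h => hlk (hYcol u l k h hu)
      simp [hlu]
    · simp
  · refine Finset.sum_eq_zero fun k _ => ?_
    rw [transpose_apply]
    rcases hY k u with hu | hu <;> rcases hY k v with hv | hv
    · simp [hu]
    · simp [hu]
    · simp [hv]
    · exact absurd ⟨k, hu, hv⟩ hsame

variable [Fintype V] [DecidableEq R]

/-- The set of columns in which row `i` of `B` is nonzero: the nodes measured by the `i`-th row of
a measurement matrix. -/
def rowSupport [Zero R] (B : Matrix ι V R) (i : ι) : Finset V :=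
  Finset.univ.filter fun u => B i u ≠ 0

theorem pairwise_disjoint_rowSupport [MulZeroClass R] [NoZeroDivisors R] {B : Matrix ι V R}
    (hB : ∀ i j, i ≠ j → ∀ u, B i u * B j u = 0) :
    Pairwise (Function.onFun Disjoint (rowSupport B)) := fun i j hij =>
  Finset.disjoint_filter.2 fun u _ hi hj => mul_ne_zero hi hj (hB i j hij u)

theorem mul_mul_transpose_apply_eq_sum_rowSupport [NonAssocSemiring R] {B : Matrix ι V R}
    (hB : ∀ i u, B i u = 0 ∨ B i u = 1) (G : Matrix V V R) (i j : ι) :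
    (B * G * Bᵀ) i j = ∑ u ∈ rowSupport B i, ∑ v ∈ rowSupport B j, G u v := by
  nontriviality R
  simp only [mul_apply, transpose_apply, Finset.sum_mul, rowSupport, Finset.sum_filter]
  rw [Finset.sum_comm]
  refine Finset.sum_congr rfl fun u _ => ?_
  rcases hB i u with hu | hu
  · simp [hu]
  · rw [if_pos (by simp [hu])]
    refine Finset.sum_congr rfl fun v _ => ?_
    rcases hB j v with hv | hv <;> simp [hu, hv]

theorem mul_mul_transpose_apply_eq_sum_crossEdges [LinearOrder V] [NonAssocSemiring R]
    {B : Matrix ι V R} (hB : ∀ i u, B i u = 0 ∨ B i u = 1) {G : Matrix V V R} (hG : G.IsSymm)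
    {i j : ι} (hij : Disjoint (rowSupport B i) (rowSupport B j)) :
    (B * G * Bᵀ) i j = ∑ e ∈ crossEdges (rowSupport B i) (rowSupport B j), G e.1.1 e.1.2 := by
  rw [mul_mul_transpose_apply_eq_sum_rowSupport hB, sum_crossEdges hij fun u v => hG.apply v u]

section Communities

variable [Fintype κ] [LinearOrder V] {B : Matrix ι V ℕ} {Y : Matrix κ V ℕ}
  [∀ u v, Decidable (∃ k, Y k u = 1 ∧ Y k v = 1)] {i j : ι}

theorem card_filter_crossEdges_same_community (hB : ∀ i u, B i u = 0 ∨ B i u = 1)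
    (hY : ∀ k u, Y k u = 0 ∨ Y k u = 1) (hYcol : ∀ u k l, Y k u = 1 → Y l u = 1 → k = l)
    (hij : Disjoint (rowSupport B i) (rowSupport B j)) :
    ((crossEdges (rowSupport B i) (rowSupport B j)).filter
      fun e => ∃ k, Y k e.1.1 = 1 ∧ Y k e.1.2 = 1).card = (B * Yᵀ * (B * Yᵀ)ᵀ) i j := by
  have hprofile : B * Yᵀ * (B * Yᵀ)ᵀ = B * (Yᵀ * Y) * Bᵀ := by
    simp only [transpose_mul, transpose_transpose, Matrix.mul_assoc]
  have hsymm : (Yᵀ * Y).IsSymm := by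
    rw [IsSymm, transpose_mul, transpose_transpose]
  simp only [hprofile, mul_mul_transpose_apply_eq_sum_crossEdges hB hsymm hij,
    transpose_mul_self_apply_eq_ite hY hYcol, Finset.card_filter]

theorem card_filter_crossEdges_not_same_community (hB : ∀ i u, B i u = 0 ∨ B i u = 1)
    (hY : ∀ k u, Y k u = 0 ∨ Y k u = 1) (hYcol : ∀ u k l, Y k u = 1 → Y l u = 1 → k = l)
    (hij : Disjoint (rowSupport B i) (rowSupport B j)) :
    ((crossEdges (rowSupport B i) (rowSupport B j)).filter
      fun e => ¬ ∃ k, Y k e.1.1 = 1 ∧ Y k e.1.2 = 1).card =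
      (rowSupport B i).card * (rowSupport B j).card - (B * Yᵀ * (B * Yᵀ)ᵀ) i j := by
  rw [← card_filter_crossEdges_same_community hB hY hYcol hij, ← card_crossEdges hij]
  exact Nat.eq_sub_of_add_eq' (Finset.card_filter_add_card_filter_not _)

end Communities

end Matrices

theorem coarsened_SSBM_entries_indep_poissonBinomial_general
    {ι κ V Ω : Type*} [LinearOrder ι] [Fintype κ] [Fintype V] [LinearOrder V]
    {p q : ℝ≥0∞} {hp : p ≤ 1} {hq : q ≤ 1}
    {Y : Matrix κ V ℕ} [∀ u v, Decidable (∃ k, Y k u = 1 ∧ Y k v = 1)]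
    (hY01 : ∀ k u, Y k u = 0 ∨ Y k u = 1)
    (hYcol : ∀ u k l, Y k u = 1 → Y l u = 1 → k = l)
    {B : Matrix ι V ℕ} (hB01 : ∀ i u, B i u = 0 ∨ B i u = 1)
    (hBdisj : ∀ i j, i ≠ j → ∀ u, B i u * B j u = 0)
    [MeasurableSpace Ω] {μ : Measure Ω} {F : Ω → Matrix V V ℕ}
    (hFmeas : ∀ u v, Measurable fun ω => F ω u v) (hFsymm : ∀ ω, (F ω).IsSymm)
    (hFindep : iIndepFun (fun (e : {e : V × V // e.1 < e.2}) ω => F ω e.1.1 e.1.2) μ)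
    (hFlaw : ∀ u v : V, u < v →
      μ.map (fun ω => F ω u v) =
        (if ∃ k, Y k u = 1 ∧ Y k v = 1 then bernNat p hp else bernNat q hq).toMeasure) :
    iIndepFun
        (fun (e : {e : ι × ι // e.2 < e.1}) ω => (B * F ω * B.transpose) e.1.1 e.1.2) μ ∧
      ∀ i j : ι, j < i →
        μ.map (fun ω => (B * F ω * B.transpose) i j) =
          (poissonBinomial p q hp hq
              ((B * Y.transpose * (B * Y.transpose).transpose) i j)
              ((rowSupport B i).card * (rowSupport B j).card -
                (B * Y.transpose * (B * Y.transpose).transpose) i j)).toMeasure := by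
  have hdisj := pairwise_disjoint_rowSupport hBdisj
  have hentry : ∀ i j : ι, j < i → ∀ ω, (B * F ω * B.transpose) i j =
      ∑ e ∈ crossEdges (rowSupport B i) (rowSupport B j), F ω e.1.1 e.1.2 := fun i j hji ω =>
    mul_mul_transpose_apply_eq_sum_crossEdges hB01 (hFsymm ω) (hdisj hji.ne')
  have hmeas : ∀ e : {e : V × V // e.1 < e.2}, Measurable fun ω => F ω e.1.1 e.1.2 :=
    fun e => hFmeas _ _
  refine ⟨?_, fun i j hji => ?_⟩
  · simp only [fun e : {e : ι × ι // e.2 < e.1} => hentry e.1.1 e.1.2 e.2]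
    exact iIndepFun_sum_of_pairwise_disjoint hmeas hFindep (pairwise_disjoint_crossEdges hdisj)
  · simp only [hentry i j hji]
    rw [map_sum_eq_toMeasure_poissonBinomial hmeas hFindep fun e _ => hFlaw _ _ e.2,
      card_filter_crossEdges_same_community hB01 hY01 hYcol (hdisj hji.ne'),
      card_filter_crossEdges_not_same_community hB01 hY01 hYcol (hdisj hji.ne')]

/-- If `F ~ SSBM(N,K,p,q)` conditional on the community assignment matrix `Y`
and `B` is an `r`-homogeneous measurement matrix with pairwise disjoint rows, then the entries
`C_{ij}`, `i > j`, of `C = B F Bᵀ` are mutually independent, and `C_{ij}` has the Poisson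
binomial law with `a_i·a_j` successes of probability `p` and `r² − a_i·a_j` of probability `q`,
where `A = B Yᵀ` is the profile matrix. -/
theorem coarsened_SSBM_entries_indep_poissonBinomial
    {N K M r : ℕ} (hr : 0 < r) (hrM : r * M ≤ N)
    (p q : ℝ≥0∞) (hp : p ≤ 1) (hq : q ≤ 1)
    -- the community assignment matrix `Y`
    (Y : Matrix (Fin K) (Fin N) ℕ)
    (hY01 : ∀ k u, Y k u = 0 ∨ Y k u = 1)
    (hYcol : ∀ u, ∃! k, Y k u = 1)
    -- the measurement matrix `B`, with pairwise disjoint `r`-homogeneous rows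
    (B : Matrix (Fin M) (Fin N) ℕ)
    (hB01 : ∀ i u, B i u = 0 ∨ B i u = 1)
    (hBdisj : ∀ i j, i ≠ j → ∀ u, B i u * B j u = 0)
    (hBhom : ∀ i, (Finset.univ.filter fun u => B i u ≠ 0).card = r)
    -- the random adjacency matrix `F`, drawn from `SSBM(N,K,p,q)` conditional on `Y`
    {Ω : Type*} [MeasurableSpace Ω] (μ : Measure Ω) [IsProbabilityMeasure μ]
    (F : Ω → Matrix (Fin N) (Fin N) ℕ)
    (hFmeas : ∀ u v, Measurable fun ω => F ω u v)
    (hFsymm : ∀ ω u v, F ω u v = F ω v u)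
    (hFdiag : ∀ ω u, F ω u u = 0)
    (hF01 : ∀ ω u v, F ω u v = 0 ∨ F ω u v = 1)
    (hFindep : iIndepFun
      (fun (e : {e : Fin N × Fin N // e.1 < e.2}) ω => F ω e.1.1 e.1.2) μ)
    (hFlaw : ∀ u v : Fin N, u < v →
      μ.map (fun ω => F ω u v) =
        (if ∃ k, Y k u = 1 ∧ Y k v = 1 then bernNat p hp else bernNat q hq).toMeasure) :
    -- conclusion: the entries `C_{ij}`, `i > j`, of `C = B F Bᵀ` are mutually independent …
    iIndepFun
        (fun (e : {e : Fin M × Fin M // e.2 < e.1}) ω =>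
          (B * F ω * B.transpose) e.1.1 e.1.2) μ ∧
      -- … and `C_{ij}` has law `PoissonBinomial({p}^{a_i·a_j}, {q}^{r² − a_i·a_j})`
      ∀ i j : Fin M, j < i →
        μ.map (fun ω => (B * F ω * B.transpose) i j) =
          (poissonBinomial p q hp hq
              ((B * Y.transpose * (B * Y.transpose).transpose) i j)
              (r ^ 2 - (B * Y.transpose * (B * Y.transpose).transpose) i j)).toMeasure := by
  have hgeneral := coarsened_SSBM_entries_indep_poissonBinomial_general hY01
    (fun u _ _ => (hYcol u).unique) hB01 hBdisj hFmeas
    (fun ω => Matrix.IsSymm.ext fun u v => hFsymm ω v u) hFindep hFlaw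
  simpa only [rowSupport, hBhom, ← sq] using hgeneral
end

section
/- Let r be a positive integer, 0 < p < 1 and 0 < q < 1, let a, a' ∈ ℕ^K be profile vectors with 0 ≤ a·a' ≤ r², and let X be a sum of r² independent Bernoulli random variables of which a·a' have success probability p and r² − a·a' have success probability q. Set θ = (a/r)·(a'/r) = a·a'/r². Then for every 0 ≤ γ ≤ 1, the tail probability U = P( X ≥ r²(γp + (1−γ)q) ) satisfies | U − Φ( r(p−q)(θ−γ) / √( p(1−p)θ + q(1−q)(1−θ) ) ) | ≤ 0.7915 / ( r·√( p(1−p)θ + q(1−q)(1−θ) ) ), where Φ is the cumulative distribution function of the standard normal distribution. -/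
open MeasureTheory
open scoped ENNReal NNReal

/-- The standard normal cumulative distribution function
`Φ(x) = ∫_{−∞}^x e^{−t²/2}/√(2π) dt`. -/
noncomputable def stdNormalCDF (x : ℝ) : ℝ :=
  ∫ t in Set.Iic x, Real.exp (-t ^ 2 / 2) / Real.sqrt (2 * Real.pi)

/-!
For an integer-valued variable with centred characteristic function `φ`, the Dirichlet kernel
expresses `P(X ≥ k)` as `1/2 + π⁻¹ ∫_0^π Im (φ t · exp (i y t)) / (2 sin (t/2)) dt`, where `y` is
the mean minus the half-integer `k - 1/2`. On the normal side,
`Φ(y/σ) = 1/2 + π⁻¹ ∫_0^∞ exp (-σ²t²/2) · sin (y t) / t dt`, so the two probabilities can be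
compared under the integral sign. A factor-by-factor estimate shows that `φ` is within
`e^{1/2} σ² t³/6 · exp (-2σ² sin² (t/2))` of the Gaussian for small `t`, and the same exponential
bounds `|φ|` up to `π`; for `σ ≥ 0.7` this costs at most `0.5/σ`. Moving from `k - 1/2` to the
actual threshold shifts the argument of `Φ` by at most `1/(2σ)`, which costs `0.2/σ` since
`Φ' ≤ 2/5`. For `σ ≤ 0.7` the bound `0.7/σ` is trivial.
-/

section
open Complex (I)
open Polynomial (C X)
open ProbabilityTheory
open scoped Real Polynomial

/-! ### Taylor remainders and products -/

theorem hasDerivAt_cexp_sub_sum_range_succ (z : ℂ) (n : ℕ) (s : ℝ) :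
    HasDerivAt
      (fun s : ℝ ↦ Complex.exp (s * z) - ∑ k ∈ Finset.range (n + 1), (s * z) ^ k / k.factorial)
      ((Complex.exp (s * z) - ∑ k ∈ Finset.range n, (s * z) ^ k / k.factorial) * z) s := by
  have hlin : HasDerivAt (fun s : ℝ ↦ (s : ℂ) * z) z s := by
    simpa using (Complex.ofRealCLM.hasDerivAt (x := s)).mul_const z
  have hterm (k : ℕ) : HasDerivAt (fun s : ℝ ↦ ((s : ℂ) * z) ^ (k + 1) / (k + 1).factorial)
      ((s * z) ^ k / k.factorial * z) s := by
    refine ((hlin.pow (k + 1)).div_const _).congr_deriv ?_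
    have : ((k + 1 : ℕ) : ℂ) ≠ 0 := mod_cast k.succ_ne_zero
    rw [Nat.factorial_succ]
    push_cast at this ⊢
    field_simp
  have hsum := HasDerivAt.fun_sum (u := Finset.range n) fun k _ ↦ hterm k
  simp only [Finset.sum_range_succ' _ n, pow_zero, sub_mul, Finset.sum_mul]
  exact hlin.cexp.sub (hsum.add_const _)

theorem norm_cexp_sub_sum_range_le_of_re_nonpos {z : ℂ} (hz : z.re ≤ 0) (n : ℕ) :
    ‖Complex.exp z - ∑ k ∈ Finset.range n, z ^ k / k.factorial‖ ≤ ‖z‖ ^ n / n.factorial := by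
  induction n generalizing z with
  | zero => simpa [Complex.norm_exp] using hz
  | succ n ih =>
    have hmajor (s : ℝ) : HasDerivAt (fun s : ℝ ↦ s ^ (n + 1) * (‖z‖ ^ (n + 1) / (n + 1).factorial))
        (s ^ n * ‖z‖ ^ (n + 1) / n.factorial) s := by
      refine ((hasDerivAt_pow (n + 1) s).mul_const _).congr_deriv ?_
      rw [Nat.factorial_succ]
      push_cast
      field_simp
    have hbound (s : ℝ) (hs : s ∈ Set.Ico (0 : ℝ) 1) :
        ‖(Complex.exp (s * z) - ∑ k ∈ Finset.range n, (s * z) ^ k / k.factorial) * z‖ ≤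
          s ^ n * ‖z‖ ^ (n + 1) / n.factorial := by
      have hsz : (s * z).re ≤ 0 := by
        simpa using mul_nonpos_of_nonneg_of_nonpos hs.1 hz
      calc _ ≤ ‖s * z‖ ^ n / n.factorial * ‖z‖ := by
            rw [norm_mul]; gcongr; exact ih hsz
        _ = s ^ n * ‖z‖ ^ (n + 1) / n.factorial := by
            rw [norm_mul, Complex.norm_real, Real.norm_of_nonneg hs.1]; ring
    simpa using image_norm_le_of_norm_deriv_right_le_deriv_boundary
      (fun s _ ↦ (hasDerivAt_cexp_sub_sum_range_succ z n s).continuousAt.continuousWithinAt)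
      (fun s _ ↦ (hasDerivAt_cexp_sub_sum_range_succ z n s).hasDerivWithinAt)
      (by simp [Finset.sum_range_succ']) hmajor hbound (Set.right_mem_Icc.2 zero_le_one)

theorem norm_prod_sub_prod_le {ι R : Type*} [NormedCommRing R] [NormOneClass R] (s : Finset ι)
    {a b : ι → R} {α d : ι → ℝ} (ha : ∀ i ∈ s, ‖a i‖ ≤ α i) (hb : ∀ i ∈ s, ‖b i‖ ≤ α i)
    (hab : ∀ i ∈ s, ‖a i - b i‖ ≤ d i * α i) :
    ‖∏ i ∈ s, a i - ∏ i ∈ s, b i‖ ≤ (∑ i ∈ s, d i) * ∏ i ∈ s, α i := by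
  classical
  induction s using Finset.induction_on with
  | empty => simp
  | insert j s hj ih =>
    simp only [Finset.forall_mem_insert] at ha hb hab
    simp only [Finset.prod_insert hj, Finset.sum_insert hj]
    have hnorm : ‖∏ i ∈ s, a i‖ ≤ ∏ i ∈ s, α i :=
      (s.norm_prod_le a).trans (Finset.prod_le_prod (fun _ _ ↦ norm_nonneg _) ha.2)
    have hfst : ‖(a j - b j) * ∏ i ∈ s, a i‖ ≤ d j * α j * ∏ i ∈ s, α i :=
      (norm_mul_le _ _).trans <|
        mul_le_mul hab.1 hnorm (norm_nonneg _) ((norm_nonneg _).trans hab.1)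
    have hsnd : ‖b j * (∏ i ∈ s, a i - ∏ i ∈ s, b i)‖ ≤
        α j * ((∑ i ∈ s, d i) * ∏ i ∈ s, α i) :=
      (norm_mul_le _ _).trans <|
        mul_le_mul hb.1 (ih ha.2 hb.2 hab.2) (norm_nonneg _) ((norm_nonneg _).trans hb.1)
    calc ‖a j * ∏ i ∈ s, a i - b j * ∏ i ∈ s, b i‖
        = ‖(a j - b j) * ∏ i ∈ s, a i + b j * (∏ i ∈ s, a i - ∏ i ∈ s, b i)‖ := by ring_nf
      _ ≤ d j * α j * ∏ i ∈ s, α i + α j * ((∑ i ∈ s, d i) * ∏ i ∈ s, α i) :=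
          norm_add_le_of_le hfst hsnd
      _ = (d j + ∑ i ∈ s, d i) * (α j * ∏ i ∈ s, α i) := by ring

/-! ### Characteristic functions -/

/-- Characteristic function of `B - p`, where `B` is a Bernoulli variable of parameter `p`. -/
noncomputable def bernoulliCharFun (p t : ℝ) : ℂ :=
  (1 - p) * Complex.exp (-(p * t) * I) + p * Complex.exp ((1 - p) * t * I)

theorem bernoulliCharFun_eq_mul_cexp (p t : ℝ) :
    bernoulliCharFun p t =
      (1 - p + p * Complex.exp (t * I)) * Complex.exp (-(p * t) * I) := by
  have : Complex.exp ((1 - p) * t * I) = Complex.exp (t * I) * Complex.exp (-(p * t) * I) := by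
    rw [← Complex.exp_add]; ring_nf
  rw [bernoulliCharFun, this]
  ring

theorem sq_norm_bernoulliCharFun (p t : ℝ) :
    ‖bernoulliCharFun p t‖ ^ 2 = 1 - 4 * (p * (1 - p)) * Real.sin (t / 2) ^ 2 := by
  have hrot : ‖Complex.exp (-(p * t) * I)‖ = 1 := by simp [Complex.norm_exp]
  have hcoord : (1 - p + p * Complex.exp (t * I) : ℂ) =
      ((1 - p + p * Real.cos t : ℝ) : ℂ) + ((p * Real.sin t : ℝ) : ℂ) * I := by
    rw [Complex.exp_mul_I]; push_cast; ring
  have hcos : Real.cos t = 1 - 2 * Real.sin (t / 2) ^ 2 := by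
    rw [Real.sin_sq_eq_half_sub, mul_div_cancel₀ t two_ne_zero]; ring
  rw [bernoulliCharFun_eq_mul_cexp, norm_mul, hrot, mul_one, hcoord, ← Complex.normSq_eq_norm_sq,
    Complex.normSq_add_mul_I]
  linear_combination p ^ 2 * Real.sin_sq_add_cos_sq t + 2 * p * (1 - p) * hcos

theorem norm_bernoulliCharFun_le (p t : ℝ) :
    ‖bernoulliCharFun p t‖ ≤ Real.exp (-(2 * (p * (1 - p)) * Real.sin (t / 2) ^ 2)) := by
  refine le_of_sq_le_sq ?_ (Real.exp_pos _).le
  calc ‖bernoulliCharFun p t‖ ^ 2 = -(4 * (p * (1 - p)) * Real.sin (t / 2) ^ 2) + 1 := by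
        rw [sq_norm_bernoulliCharFun]; ring
    _ ≤ Real.exp (-(4 * (p * (1 - p)) * Real.sin (t / 2) ^ 2)) := Real.add_one_le_exp _
    _ = Real.exp (-(2 * (p * (1 - p)) * Real.sin (t / 2) ^ 2)) ^ 2 := by
        rw [← Real.exp_nat_mul]; push_cast; ring_nf

theorem mul_one_sub_mem_Icc {p : ℝ} (hp : p ∈ Set.Icc 0 1) :
    p * (1 - p) ∈ Set.Icc (0 : ℝ) (1 / 4) :=
  ⟨mul_nonneg hp.1 (sub_nonneg.2 hp.2), by linarith [sq_nonneg (p - 1 / 2)]⟩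

theorem norm_bernoulliCharFun_sub_exp_le {p t : ℝ} (hp : p ∈ Set.Icc 0 1)
    (ht : t ∈ Set.Icc 0 (8 / 3)) :
    ‖bernoulliCharFun p t - Real.exp (-(p * (1 - p) / 2) * t ^ 2)‖ ≤ p * (1 - p) * (t ^ 3 / 6) := by
  have hv0 : 0 ≤ p * (1 - p) := (mul_one_sub_mem_Icc hp).1
  have hq : 0 ≤ 1 - p := sub_nonneg.2 hp.2
  let R (n : ℕ) (z : ℂ) : ℂ := Complex.exp z - ∑ k ∈ Finset.range n, z ^ k / k.factorial
  have hsplit : bernoulliCharFun p t - Real.exp (-(p * (1 - p) / 2) * t ^ 2) =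
      (1 - p : ℝ) * R 3 (((-(p * t) : ℝ) : ℂ) * I) + (p : ℝ) * R 3 ((((1 - p) * t : ℝ) : ℂ) * I) -
        R 2 ((-(p * (1 - p) / 2 * t ^ 2) : ℝ) : ℂ) := by
    simp only [R, bernoulliCharFun, Finset.sum_range_succ, Finset.sum_range_zero, mul_pow,
      Complex.I_sq]
    push_cast [Nat.factorial]
    ring_nf
  have hcubic (x : ℝ) : ‖R 3 (x * I)‖ ≤ |x| ^ 3 / 6 := by
    simpa [R, Nat.factorial] using
      norm_cexp_sub_sum_range_le_of_re_nonpos (z := x * I) (by simp) 3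
  have hquad (u : ℝ) (hu : 0 ≤ u) : ‖R 2 ((-u : ℝ) : ℂ)‖ ≤ u ^ 2 / 2 := by
    simpa [R] using norm_cexp_sub_sum_range_le_of_re_nonpos (z := ((-u : ℝ) : ℂ)) (by simpa) 2
  calc ‖bernoulliCharFun p t - Real.exp (-(p * (1 - p) / 2) * t ^ 2)‖
      ≤ (1 - p) * (|-(p * t)| ^ 3 / 6) + p * (|(1 - p) * t| ^ 3 / 6) +
          (p * (1 - p) / 2 * t ^ 2) ^ 2 / 2 := by
        rw [hsplit]
        refine norm_sub_le_of_le (norm_add_le_of_le ?_ ?_) (hquad _ (by positivity))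
        · rw [norm_mul, Complex.norm_real, Real.norm_of_nonneg hq]
          exact mul_le_mul_of_nonneg_left (hcubic _) hq
        · rw [norm_mul, Complex.norm_real, Real.norm_of_nonneg hp.1]
          exact mul_le_mul_of_nonneg_left (hcubic _) hp.1
    _ = p * (1 - p) * (t ^ 3 / 6) * (1 - p * (1 - p) * (2 - 3 * t / 4)) := by
        rw [abs_neg, abs_of_nonneg (mul_nonneg hp.1 ht.1), abs_of_nonneg (mul_nonneg hq ht.1)]
        ring
    _ ≤ p * (1 - p) * (t ^ 3 / 6) := by
        refine mul_le_of_le_one_right (mul_nonneg hv0 (by have := ht.1; positivity)) ?_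
        nlinarith [ht.2]

theorem exp_neg_mul_sq_le_exp_neg_mul_sin_sq {v : ℝ} (hv : 0 ≤ v) (t : ℝ) :
    Real.exp (-(v / 2) * t ^ 2) ≤ Real.exp (-(2 * v * Real.sin (t / 2) ^ 2)) := by
  have hsin : Real.sin (t / 2) ^ 2 ≤ (t / 2) ^ 2 := sq_le_sq.2 Real.abs_sin_le_abs
  refine Real.exp_le_exp.2 ?_
  calc -(v / 2) * t ^ 2 = -(2 * v * (t / 2) ^ 2) := by ring
    _ ≤ -(2 * v * Real.sin (t / 2) ^ 2) := by gcongr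

section PoissonBinomial
variable {ι : Type*} [Fintype ι] (p : ι → ℝ) (t : ℝ)

/-- Characteristic function of `∑ i, (B i - p i)` for independent Bernoulli variables `B i` of
parameters `p i`. -/
noncomputable def poissonBinomialCharFun : ℂ := ∏ i, bernoulliCharFun (p i) t

theorem prod_exp_neg_mul_sin_sq :
    ∏ i, Real.exp (-(2 * (p i * (1 - p i)) * Real.sin (t / 2) ^ 2)) =
      Real.exp (-(2 * (∑ i, p i * (1 - p i)) * Real.sin (t / 2) ^ 2)) := by
  rw [← Real.exp_sum, Finset.sum_neg_distrib, Finset.mul_sum, Finset.sum_mul]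

theorem norm_poissonBinomialCharFun_le :
    ‖poissonBinomialCharFun p t‖ ≤
      Real.exp (-(2 * (∑ i, p i * (1 - p i)) * Real.sin (t / 2) ^ 2)) := by
  rw [poissonBinomialCharFun, norm_prod, ← prod_exp_neg_mul_sin_sq]
  exact Finset.prod_le_prod (fun _ _ ↦ norm_nonneg _) fun i _ ↦ norm_bernoulliCharFun_le (p i) t

variable {p t}

theorem norm_poissonBinomialCharFun_sub_exp_le (hp : ∀ i, p i ∈ Set.Icc 0 1)
    (ht : t ∈ Set.Icc 0 (8 / 3)) :
    ‖poissonBinomialCharFun p t - Real.exp (-((∑ i, p i * (1 - p i)) / 2) * t ^ 2)‖ ≤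
      Real.exp (1 / 2) * ((∑ i, p i * (1 - p i)) * (t ^ 3 / 6)) *
        Real.exp (-(2 * (∑ i, p i * (1 - p i)) * Real.sin (t / 2) ^ 2)) := by
  have hgauss : ((Real.exp (-((∑ i, p i * (1 - p i)) / 2) * t ^ 2) : ℝ) : ℂ) =
      ∏ i, ((Real.exp (-(p i * (1 - p i) / 2) * t ^ 2) : ℝ) : ℂ) := by
    rw [← Complex.ofReal_prod, ← Real.exp_sum, ← Finset.sum_mul, Finset.sum_neg_distrib,
      Finset.sum_div]
  -- Telescoping drops the exponential of index `i`; restoring it costs a factor at most `e^{1/2}`.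
  have hcost (i : ι) :
      1 ≤ Real.exp (1 / 2) * Real.exp (-(2 * (p i * (1 - p i)) * Real.sin (t / 2) ^ 2)) := by
    rw [← Real.exp_add]
    refine Real.one_le_exp ?_
    have := mul_le_mul (mul_one_sub_mem_Icc (hp i)).2 (Real.sin_sq_le_one (t / 2)) (sq_nonneg _)
      (by norm_num)
    linarith
  have hsum : Real.exp (1 / 2) * ((∑ i, p i * (1 - p i)) * (t ^ 3 / 6)) =
      ∑ i, Real.exp (1 / 2) * (p i * (1 - p i) * (t ^ 3 / 6)) := by
    rw [Finset.sum_mul, Finset.mul_sum]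
  rw [hgauss, hsum, ← prod_exp_neg_mul_sin_sq, poissonBinomialCharFun]
  refine norm_prod_sub_prod_le _ (fun i _ ↦ norm_bernoulliCharFun_le (p i) t) (fun i _ ↦ ?_)
    fun i _ ↦ ?_
  · rw [Complex.norm_real, Real.norm_of_nonneg (Real.exp_pos _).le]
    exact exp_neg_mul_sq_le_exp_neg_mul_sin_sq (mul_one_sub_mem_Icc (hp i)).1 t
  · have hnonneg : 0 ≤ p i * (1 - p i) * (t ^ 3 / 6) :=
      mul_nonneg (mul_one_sub_mem_Icc (hp i)).1 (by have := ht.1; positivity)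
    refine (norm_bernoulliCharFun_sub_exp_le (hp i) ht).trans ?_
    linarith [le_mul_of_one_le_right hnonneg (hcost i)]

end PoissonBinomial

/-! ### The normal distribution function -/

theorem exp_div_sqrt_eq_gaussianPDFReal (t : ℝ) :
    Real.exp (-t ^ 2 / 2) / √(2 * π) = gaussianPDFReal 0 1 t := by
  simp [gaussianPDFReal, div_eq_inv_mul]

theorem stdNormalCDF_eq_cdf (x : ℝ) : stdNormalCDF x = cdf (gaussianReal 0 1) x := by
  simp only [stdNormalCDF, exp_div_sqrt_eq_gaussianPDFReal]
  rw [cdf_eq_real, measureReal_def, gaussianReal_apply_eq_integral _ one_ne_zero,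
    ENNReal.toReal_ofReal (integral_nonneg fun t ↦ gaussianPDFReal_nonneg 0 1 t)]

theorem stdNormalCDF_mem_Icc (x : ℝ) : stdNormalCDF x ∈ Set.Icc 0 1 := by
  rw [stdNormalCDF_eq_cdf]
  exact ⟨cdf_nonneg _ _, cdf_le_one _ _⟩

theorem stdNormalCDF_zero : stdNormalCDF 0 = 1 / 2 := by
  have hhalf := integral_gaussian_Ioi (1 / 2)
  have hreflect := integral_comp_neg_Iic (0 : ℝ) fun t ↦ Real.exp (-(1 / 2) * t ^ 2)
  have hexp (t : ℝ) : Real.exp (-t ^ 2 / 2) = Real.exp (-(1 / 2) * t ^ 2) := by ring_nf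
  simp only [neg_sq, neg_zero] at hreflect
  simp only [stdNormalCDF, hexp]
  rw [integral_div, hreflect, hhalf, div_div_eq_mul_div, div_one, mul_comm π]
  field_simp

theorem hasDerivAt_stdNormalCDF (x : ℝ) :
    HasDerivAt stdNormalCDF (gaussianPDFReal 0 1 x) x := by
  have hcont : Continuous (gaussianPDFReal 0 1) := by
    unfold gaussianPDFReal; fun_prop
  have hint (y : ℝ) : IntegrableOn (gaussianPDFReal 0 1) (Set.Iic y) :=
    (integrable_gaussianPDFReal 0 1).integrableOn
  have hFTC : stdNormalCDF = fun y ↦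
      (∫ t in Set.Iic 0, gaussianPDFReal 0 1 t) + ∫ t in (0 : ℝ)..y, gaussianPDFReal 0 1 t := by
    ext y
    rw [← intervalIntegral.integral_Iic_sub_Iic (hint 0) (hint y), add_sub_cancel]
    simp only [stdNormalCDF, exp_div_sqrt_eq_gaussianPDFReal]
  rw [hFTC]
  exact (intervalIntegral.integral_hasDerivAt_right (hcont.intervalIntegrable _ _)
    hcont.stronglyMeasurable.stronglyMeasurableAtFilter hcont.continuousAt).const_add _

theorem gaussianPDFReal_zero_one_le (x : ℝ) : gaussianPDFReal 0 1 x ≤ 2 / 5 := by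
  have hsqrt : 5 / 2 ≤ √(2 * π) := Real.le_sqrt_of_sq_le (by linarith [Real.pi_gt_d2])
  have hexp : Real.exp (-x ^ 2 / 2) ≤ 1 := Real.exp_le_one_iff.2 (by linarith [sq_nonneg x])
  rw [← exp_div_sqrt_eq_gaussianPDFReal, div_le_iff₀ (by positivity)]
  linarith

theorem abs_stdNormalCDF_sub_le (x y : ℝ) :
    |stdNormalCDF x - stdNormalCDF y| ≤ 2 / 5 * |x - y| := by
  refine convex_univ.norm_image_sub_le_of_norm_hasDerivWithin_le
    (fun z _ ↦ (hasDerivAt_stdNormalCDF z).hasDerivWithinAt) (fun z _ ↦ ?_)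
    (Set.mem_univ y) (Set.mem_univ x)
  rw [Real.norm_of_nonneg (gaussianPDFReal_nonneg 0 1 z)]
  exact gaussianPDFReal_zero_one_le z

theorem integral_Ioi_exp_neg_mul_sq_mul_cos {b : ℝ} (hb : 0 < b) (y : ℝ) :
    ∫ t in Set.Ioi (0 : ℝ), Real.exp (-b * t ^ 2) * Real.cos (y * t) =
      √(π / b) / 2 * Real.exp (-y ^ 2 / (4 * b)) := by
  have hint : Integrable fun t : ℝ ↦ Complex.exp (I * y * t) * Complex.exp (-b * t ^ 2) := by
    refine (integrable_cexp_quadratic (b := b) (by simpa) (I * y) 0).congr (.of_forall fun t ↦ ?_)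
    simp only
    rw [← Complex.exp_add]
    ring_nf
  have hre (t : ℝ) : (Complex.exp (I * y * t) * Complex.exp (-b * t ^ 2)).re =
      Real.exp (-b * |t| ^ 2) * Real.cos (y * |t|) := by
    have harg : I * y * t = ((y * t : ℝ) : ℂ) * I := by push_cast; ring
    have hcos : Real.cos (y * |t|) = Real.cos (y * t) := by
      rw [← Real.cos_abs, abs_mul, abs_abs, ← abs_mul, Real.cos_abs]
    rw [harg, sq_abs, hcos, mul_comm, ← Complex.exp_ofReal_mul_I_re, ← Complex.re_ofReal_mul]
    push_cast
    rfl
  have hvalue : ((π / b : ℂ) ^ (1 / 2 : ℂ) * Complex.exp (-(y : ℂ) ^ 2 / (4 * b))).re =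
      √(π / b) * Real.exp (-y ^ 2 / (4 * b)) := by
    rw [Real.sqrt_eq_rpow, ← Complex.ofReal_re (_ * _)]
    push_cast [Complex.ofReal_cpow (show 0 ≤ π / b by positivity)]
    rfl
  have hfourier := congrArg Complex.re (fourierIntegral_gaussian (b := b) (by simpa) y)
  have hcomm := integral_re hint
  simp only [RCLike.re_to_complex] at hcomm
  rw [hvalue, ← hcomm] at hfourier
  simp only [hre] at hfourier
  rw [integral_comp_abs (f := fun t ↦ Real.exp (-b * t ^ 2) * Real.cos (y * t))] at hfourier
  linarith

theorem abs_sin_mul_div_le (y t : ℝ) : |Real.sin (y * t) / t| ≤ |y| := by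
  rw [abs_div]
  refine div_le_of_le_mul₀ (abs_nonneg t) (abs_nonneg y) ?_
  rw [← abs_mul]
  exact Real.abs_sin_le_abs

theorem integrable_exp_neg_mul_sq_mul_sin_div {b : ℝ} (hb : 0 < b) (y : ℝ) :
    Integrable fun t : ℝ ↦ Real.exp (-b * t ^ 2) * (Real.sin (y * t) / t) :=
  (integrable_exp_neg_mul_sq hb).mul_bdd (c := |y|)
    (Measurable.aestronglyMeasurable (by fun_prop)) (.of_forall fun t ↦ abs_sin_mul_div_le y t)

theorem hasDerivAt_integral_exp_neg_mul_sq_mul_sin_div {b : ℝ} (hb : 0 < b) (y : ℝ) :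
    HasDerivAt
      (fun y ↦ ∫ t in Set.Ioi (0 : ℝ), Real.exp (-b * t ^ 2) * (Real.sin (y * t) / t))
      (√(π / b) / 2 * Real.exp (-y ^ 2 / (4 * b))) y := by
  rw [← integral_Ioi_exp_neg_mul_sq_mul_cos hb]
  refine (hasDerivAt_integral_of_dominated_loc_of_deriv_le (s := Set.univ)
    (F' := fun y t ↦ Real.exp (-b * t ^ 2) * Real.cos (y * t))
    (bound := fun t ↦ Real.exp (-b * t ^ 2)) Filter.univ_mem
    (.of_forall fun x ↦
      (integrable_exp_neg_mul_sq_mul_sin_div hb x).aestronglyMeasurable.restrict)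
    (integrable_exp_neg_mul_sq_mul_sin_div hb y).integrableOn
    (Continuous.aestronglyMeasurable (by fun_prop)) (.of_forall fun t x _ ↦ ?_)
    (integrable_exp_neg_mul_sq hb).integrableOn ?_).2
  · rw [norm_mul, Real.norm_of_nonneg (Real.exp_pos _).le]
    exact mul_le_of_le_one_right (Real.exp_pos _).le (Real.abs_cos_le_one _)
  · refine ae_restrict_of_forall_mem measurableSet_Ioi fun t ht x _ ↦ ?_
    have hsin := ((hasDerivAt_mul_const t).sin.div_const t : HasDerivAt _ _ x)
    rw [mul_div_cancel_right₀ _ (ne_of_gt ht)] at hsin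
    exact hsin.const_mul _

theorem stdNormalCDF_div_eq_integral {σ : ℝ} (hσ : 0 < σ) (y : ℝ) :
    stdNormalCDF (y / σ) = 1 / 2 + π⁻¹ *
      ∫ t in Set.Ioi (0 : ℝ), Real.exp (-(σ ^ 2 / 2) * t ^ 2) * (Real.sin (y * t) / t) := by
  have hdens (z : ℝ) : gaussianPDFReal 0 1 (z / σ) * σ⁻¹ =
      π⁻¹ * (√(π / (σ ^ 2 / 2)) / 2 * Real.exp (-z ^ 2 / (4 * (σ ^ 2 / 2)))) := by
    have hsqrt : √(π / (σ ^ 2 / 2)) = √(2 * π) / σ := by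
      rw [div_div_eq_mul_div, mul_comm π, Real.sqrt_div (by positivity), Real.sqrt_sq hσ.le]
    have hexp : -z ^ 2 / (4 * (σ ^ 2 / 2)) = -(z / σ) ^ 2 / 2 := by ring
    have hsq : √(2 * π) ^ 2 = 2 * π := Real.sq_sqrt (by positivity)
    rw [← exp_div_sqrt_eq_gaussianPDFReal, hsqrt, hexp]
    field_simp
    linarith
  have hderiv (z : ℝ) : HasDerivAt (fun z ↦ stdNormalCDF (z / σ) - π⁻¹ *
      ∫ t in Set.Ioi (0 : ℝ), Real.exp (-(σ ^ 2 / 2) * t ^ 2) * (Real.sin (z * t) / t)) 0 z := by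
    have hΦ := (hasDerivAt_stdNormalCDF (z / σ)).comp z ((hasDerivAt_id z).div_const σ)
    rw [one_div, hdens] at hΦ
    exact (hΦ.sub ((hasDerivAt_integral_exp_neg_mul_sq_mul_sin_div (by positivity) z).const_mul
      π⁻¹)).congr_deriv (sub_self _)
  have hconst := is_const_of_deriv_eq_zero (fun z ↦ (hderiv z).differentiableAt)
    (fun z ↦ (hderiv z).deriv) y 0
  simp only [zero_div, zero_mul, Real.sin_zero, mul_zero, integral_zero, sub_zero,
    stdNormalCDF_zero] at hconst
  exact sub_eq_iff_eq_add.1 hconst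

/-! ### Lattice Fourier inversion -/

theorem sin_nat_add_half_mul (n : ℕ) (t : ℝ) :
    Real.sin ((n + 1 / 2) * t) =
      2 * Real.sin (t / 2) * (1 / 2 + ∑ i ∈ Finset.range n, Real.cos ((i + 1) * t)) := by
  induction n with
  | zero =>
    rw [Nat.cast_zero, zero_add, Finset.sum_range_zero]
    ring_nf
  | succ n ih =>
    have hdiff := Real.sin_sub_sin (((n + 1 : ℕ) + 1 / 2) * t) ((n + 1 / 2) * t)
    have hhalf : (((n + 1 : ℕ) + 1 / 2) * t - (n + 1 / 2) * t) / 2 = t / 2 := by push_cast; ring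
    have hmid : (((n + 1 : ℕ) + 1 / 2) * t + (n + 1 / 2) * t) / 2 = (n + 1) * t := by
      push_cast; ring
    rw [hhalf, hmid, ih] at hdiff
    rw [Finset.sum_range_succ]
    linarith

/-- Half of the Dirichlet kernel of index `n`, with the junk value `0` where `sin (t / 2) = 0`.
Negative indices are allowed, which gives kernels whose integral over `(0, π)` is `±π / 2` according
to the sign of `n + 1 / 2`. -/
noncomputable def dirichletKernel (n : ℤ) (t : ℝ) : ℝ :=
  Real.sin ((n + 1 / 2) * t) / (2 * Real.sin (t / 2))

theorem dirichletKernel_negSucc (n : ℕ) (t : ℝ) :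
    dirichletKernel (Int.negSucc n) t = -dirichletKernel n t := by
  have hodd : (((Int.negSucc n : ℤ) : ℝ) + 1 / 2) * t = -(((n : ℤ) + 1 / 2) * t) := by
    push_cast; ring
  rw [dirichletKernel, hodd, Real.sin_neg, neg_div, dirichletKernel]

theorem dirichletKernel_natCast {t : ℝ} (ht : t ∈ Set.Ioc 0 π) (n : ℕ) :
    dirichletKernel n t = 1 / 2 + ∑ i ∈ Finset.range n, Real.cos ((i + 1) * t) := by
  have hsin : 0 < Real.sin (t / 2) :=
    Real.sin_pos_of_pos_of_lt_pi (by linarith [ht.1]) (by linarith [ht.2, Real.pi_pos])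
  rw [dirichletKernel, Int.cast_natCast, sin_nat_add_half_mul,
    mul_div_cancel_left₀ _ (by positivity)]

theorem intervalIntegrable_dirichletKernel (n : ℤ) :
    IntervalIntegrable (dirichletKernel n) volume 0 π := by
  have hnat (m : ℕ) : IntervalIntegrable (dirichletKernel m) volume 0 π := by
    have hcos : Continuous fun t : ℝ ↦ 1 / 2 + ∑ i ∈ Finset.range m, Real.cos ((i + 1) * t) := by
      fun_prop
    refine (hcos.intervalIntegrable 0 π).congr fun t ht ↦ ?_
    rw [Set.uIoc_of_le Real.pi_pos.le] at ht
    exact (dirichletKernel_natCast ht m).symm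
  cases n with
  | ofNat m => exact hnat m
  | negSucc m =>
    rw [funext (dirichletKernel_negSucc m)]
    exact (hnat m).neg

theorem integral_cos_nat_succ_mul (i : ℕ) : ∫ t in 0..π, Real.cos ((i + 1) * t) = 0 := by
  have hsin : Real.sin ((i + 1) * π) = 0 := mod_cast Real.sin_nat_mul_pi (i + 1)
  rw [intervalIntegral.integral_comp_mul_left (fun t ↦ Real.cos t) i.cast_add_one_ne_zero,
    integral_cos, hsin, mul_zero, Real.sin_zero, sub_zero, smul_zero]

theorem integral_dirichletKernel (n : ℤ) :
    ∫ t in 0..π, dirichletKernel n t = if 0 ≤ n then π / 2 else -(π / 2) := by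
  have hnat (m : ℕ) : ∫ t in 0..π, dirichletKernel m t = π / 2 := by
    have hexpand : ∫ t in 0..π, dirichletKernel m t =
        ∫ t in 0..π, (1 / 2 + ∑ i ∈ Finset.range m, Real.cos ((i + 1) * t)) := by
      refine intervalIntegral.integral_congr_ae (.of_forall fun t ht ↦ ?_)
      rw [Set.uIoc_of_le Real.pi_pos.le] at ht
      exact dirichletKernel_natCast ht m
    have hcos (i : ℕ) : IntervalIntegrable (fun t ↦ Real.cos ((i + 1) * t)) volume 0 π :=
      Continuous.intervalIntegrable (by fun_prop) 0 π
    rw [hexpand, intervalIntegral.integral_add intervalIntegrable_const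
        (Continuous.intervalIntegrable (by fun_prop) 0 π),
      intervalIntegral.integral_finsetSum fun i _ ↦ hcos i,
      Finset.sum_eq_zero fun i _ ↦ integral_cos_nat_succ_mul i, intervalIntegral.integral_const,
      add_zero, sub_zero, smul_eq_mul, mul_one_div]
  cases n with
  | ofNat m => simpa using hnat m
  | negSucc m =>
    simp only [dirichletKernel_negSucc, intervalIntegral.integral_neg, hnat,
      (Int.negSucc_lt_zero m).not_ge, if_false]

/-- Integrand of the Fourier inversion formula for the upper tail of a lattice variable whose
characteristic function, centred at `μ`, is `φ`: for the tail from the integer `k` on, take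
`y = μ - (k - 1 / 2)`. Its value at `t = 0` is the junk value `0`. -/
noncomputable def tailIntegrand (φ : ℝ → ℂ) (y t : ℝ) : ℝ :=
  (φ t * Complex.exp (y * t * I)).im / (2 * Real.sin (t / 2))

section Inversion
variable (f : ℝ[X]) (k : ℤ)

theorem tailIntegrand_aeval (t : ℝ) :
    tailIntegrand (fun t ↦ f.aeval (Complex.exp (t * I))) (1 / 2 - k) t =
      ∑ j ∈ f.support, f.coeff j * dirichletKernel (j - k) t := by
  have hterm (j : ℕ) : (algebraMap ℝ ℂ (f.coeff j) * Complex.exp (t * I) ^ j *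
      Complex.exp (((1 / 2 - k : ℝ) : ℂ) * t * I)).im =
        f.coeff j * Real.sin (((j - k : ℤ) + 1 / 2) * t) := by
    have hexp : Complex.exp (t * I) ^ j * Complex.exp (((1 / 2 - k : ℝ) : ℂ) * t * I) =
        Complex.exp (((((j - k : ℤ) + 1 / 2) * t : ℝ) : ℂ) * I) := by
      rw [← Complex.exp_nat_mul, ← Complex.exp_add]
      push_cast
      ring_nf
    rw [mul_assoc, hexp, Complex.coe_algebraMap, Complex.im_ofReal_mul, Complex.exp_ofReal_mul_I_im]
  rw [tailIntegrand, Polynomial.aeval_def, Polynomial.eval₂_eq_sum, Polynomial.sum,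
    Finset.sum_mul, Complex.im_sum, Finset.sum_div]
  exact Finset.sum_congr rfl fun j _ ↦ by rw [hterm, dirichletKernel, mul_div_assoc]

theorem intervalIntegrable_tailIntegrand_aeval :
    IntervalIntegrable (tailIntegrand (fun t ↦ f.aeval (Complex.exp (t * I))) (1 / 2 - k))
      volume 0 π := by
  rw [funext (tailIntegrand_aeval f k)]
  simpa only [Finset.sum_fn] using IntervalIntegrable.sum f.support fun (j : ℕ) _ ↦
    (intervalIntegrable_dirichletKernel (j - k)).const_mul (f.coeff j)

theorem sum_coeff_ge_eq_integral :
    ∑ j ∈ f.support with k ≤ ((j : ℕ) : ℤ), f.coeff j = f.eval 1 / 2 + π⁻¹ *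
      ∫ t in 0..π, tailIntegrand (fun t ↦ f.aeval (Complex.exp (t * I))) (1 / 2 - k) t := by
  have hint (j : ℕ) :
      IntervalIntegrable (fun t ↦ f.coeff j * dirichletKernel (j - k) t) volume 0 π :=
    (intervalIntegrable_dirichletKernel (j - k)).const_mul (f.coeff j)
  simp only [tailIntegrand_aeval]
  rw [intervalIntegral.integral_finsetSum fun j _ ↦ hint j, Polynomial.eval_eq_sum,
    Polynomial.sum, Finset.sum_div, Finset.mul_sum, ← Finset.sum_add_distrib, Finset.sum_filter]
  refine Finset.sum_congr rfl fun j _ ↦ ?_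
  rw [intervalIntegral.integral_const_mul, integral_dirichletKernel, one_pow, mul_one]
  simp only [sub_nonneg]
  have := Real.pi_pos
  split_ifs <;> field_simp <;> ring

end Inversion

/-! ### Generating polynomials -/

theorem map_const_add_apply (ν : PMF ℕ) (s n : ℕ) :
    ν.map (fun x ↦ s + x) n = if s ≤ n then ν (n - s) else 0 := by
  rw [PMF.map_apply]
  split_ifs with hs
  · exact (tsum_eq_single (n - s) fun x hx ↦ if_neg (by omega)).trans (if_pos (by omega))
  · exact ENNReal.tsum_eq_zero.2 fun x ↦ if_neg (by omega)

/-- `f` is the probability generating polynomial of the law `μ` on `ℕ`. -/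
def HasGenPoly (μ : PMF ℕ) (f : ℝ[X]) : Prop :=
  ∀ n, (μ n).toReal = f.coeff n

namespace HasGenPoly
variable {μ ν : PMF ℕ} {f g : ℝ[X]}

theorem apply_eq_ofReal_coeff (hf : HasGenPoly μ f) (n : ℕ) : μ n = ENNReal.ofReal (f.coeff n) := by
  rw [← hf n, ENNReal.ofReal_toReal (μ.apply_ne_top n)]

theorem coeff_nonneg (hf : HasGenPoly μ f) (n : ℕ) : 0 ≤ f.coeff n :=
  hf n ▸ ENNReal.toReal_nonneg

protected theorem pure_zero : HasGenPoly (PMF.pure 0) 1 := fun n ↦ by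
  rw [PMF.pure_apply, Polynomial.coeff_one]
  split_ifs <;> simp

theorem bind_map_add (hf : HasGenPoly μ f) (hg : HasGenPoly ν g) :
    HasGenPoly (μ.bind fun s ↦ ν.map fun x ↦ s + x) (f * g) := fun n ↦ by
  have hterm (s : ℕ) : μ s * ν.map (fun x ↦ s + x) n =
      if s ≤ n then ENNReal.ofReal (f.coeff s * g.coeff (n - s)) else 0 := by
    rw [map_const_add_apply, mul_ite, mul_zero, hf.apply_eq_ofReal_coeff, hg.apply_eq_ofReal_coeff,
      ENNReal.ofReal_mul (hf.coeff_nonneg s)]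
  have hnonneg (s : ℕ) : 0 ≤ f.coeff s * g.coeff (n - s) :=
    mul_nonneg (hf.coeff_nonneg s) (hg.coeff_nonneg _)
  rw [PMF.bind_apply, tsum_congr hterm, Polynomial.coeff_mul,
    Finset.Nat.sum_antidiagonal_eq_sum_range_succ fun i j ↦ f.coeff i * g.coeff j,
    tsum_eq_sum (s := Finset.range n.succ) fun s hs ↦ if_neg (by simpa using hs),
    Finset.sum_congr rfl fun s hs ↦ if_pos (Finset.mem_range_succ_iff.1 hs),
    ← ENNReal.ofReal_sum_of_nonneg fun s _ ↦ hnonneg s,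
    ENNReal.toReal_ofReal (Finset.sum_nonneg fun s _ ↦ hnonneg s)]

protected theorem iidSum (hf : HasGenPoly μ f) (n : ℕ) : HasGenPoly (iidSum μ n) (f ^ n) := by
  induction n with
  | zero => exact HasGenPoly.pure_zero
  | succ n ih => exact pow_succ f n ▸ ih.bind_map_add hf

theorem toReal_toMeasure (hf : HasGenPoly μ f) (S : Set ℕ) [DecidablePred (· ∈ S)] :
    (μ.toMeasure S).toReal = ∑ n ∈ f.support with n ∈ S, f.coeff n := by
  have hterm (n : ℕ) : S.indicator μ n = if n ∈ S then ENNReal.ofReal (f.coeff n) else 0 := by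
    rw [Set.indicator_apply, hf.apply_eq_ofReal_coeff]
  have hsupp (n : ℕ) (hn : n ∉ f.support) :
      (if n ∈ S then ENNReal.ofReal (f.coeff n) else 0) = 0 := by
    rw [Polynomial.notMem_support_iff.1 hn, ENNReal.ofReal_zero, ite_self]
  rw [PMF.toMeasure_apply_eq_tsum, tsum_congr hterm, tsum_eq_sum hsupp, ← Finset.sum_filter,
    ← ENNReal.ofReal_sum_of_nonneg fun n _ ↦ hf.coeff_nonneg n,
    ENNReal.toReal_ofReal (Finset.sum_nonneg fun n _ ↦ hf.coeff_nonneg n)]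

end HasGenPoly

/-- Probability generating polynomial of the Poisson binomial law: the sum of independent
Bernoulli variables of parameters `p i`. -/
noncomputable def poissonBinomialGenPoly {ι : Type*} [Fintype ι] (p : ι → ℝ) : ℝ[X] :=
  ∏ i, (C (1 - p i) + C (p i) * X)

theorem hasGenPoly_bernNat {p : ℝ} (hp : p ∈ Set.Icc 0 1) :
    HasGenPoly (bernNat (ENNReal.ofReal p) (ENNReal.ofReal_le_one.2 hp.2))
      (C (1 - p) + C p * X) := fun n ↦ by
  rw [bernNat, PMF.map_apply, tsum_fintype, Fintype.sum_bool, Polynomial.coeff_add,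
    Polynomial.coeff_C, Polynomial.coeff_C_mul, Polynomial.coeff_X]
  match n with
  | 0 => simp [ENNReal.toReal_sub_of_le, hp.1, hp.2]
  | 1 => simp [hp.1]
  | n + 2 => simp

theorem hasGenPoly_poissonBinomial {p q : ℝ} (hp : p ∈ Set.Icc 0 1) (hq : q ∈ Set.Icc 0 1)
    (m k : ℕ) :
    HasGenPoly
      (poissonBinomial (ENNReal.ofReal p) (ENNReal.ofReal q) (ENNReal.ofReal_le_one.2 hp.2)
        (ENNReal.ofReal_le_one.2 hq.2) m k)
      (poissonBinomialGenPoly (Sum.elim (fun _ : Fin m ↦ p) (fun _ : Fin k ↦ q))) := by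
  simpa [poissonBinomial, poissonBinomialGenPoly] using
    ((hasGenPoly_bernNat hp).iidSum m).bind_map_add ((hasGenPoly_bernNat hq).iidSum k)

section PoissonBinomial
variable {ι : Type*} [Fintype ι] (p : ι → ℝ)

theorem eval_one_poissonBinomialGenPoly : (poissonBinomialGenPoly p).eval 1 = 1 := by
  simp [poissonBinomialGenPoly, Polynomial.eval_prod]

theorem poissonBinomialCharFun_eq_aeval_mul_cexp (t : ℝ) :
    poissonBinomialCharFun p t =
      (poissonBinomialGenPoly p).aeval (Complex.exp (t * I)) *
        Complex.exp (-(((∑ i, p i : ℝ) : ℂ) * t) * I) := by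
  have hrot : Complex.exp (-(((∑ i, p i : ℝ) : ℂ) * t) * I) =
      ∏ i, Complex.exp (-(p i * t) * I) := by
    rw [← Complex.exp_sum, ← Finset.sum_mul, Finset.sum_neg_distrib, ← Finset.sum_mul,
      Complex.ofReal_sum]
  simp only [poissonBinomialCharFun, bernoulliCharFun_eq_mul_cexp, poissonBinomialGenPoly, map_prod,
    hrot, Finset.prod_mul_distrib]
  simp

theorem tailIntegrand_poissonBinomialCharFun (k : ℤ) :
    tailIntegrand (poissonBinomialCharFun p) (∑ i, p i + (1 / 2 - k)) =
      tailIntegrand (fun t ↦ (poissonBinomialGenPoly p).aeval (Complex.exp (t * I)))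
        (1 / 2 - k) := by
  ext t
  rw [tailIntegrand, tailIntegrand, poissonBinomialCharFun_eq_aeval_mul_cexp, mul_assoc,
    ← Complex.exp_add, Complex.ofReal_add]
  ring_nf

theorem intervalIntegrable_tailIntegrand_poissonBinomialCharFun (k : ℤ) :
    IntervalIntegrable (tailIntegrand (poissonBinomialCharFun p) (∑ i, p i + (1 / 2 - k)))
      volume 0 π := by
  rw [tailIntegrand_poissonBinomialCharFun]
  exact intervalIntegrable_tailIntegrand_aeval _ k

theorem HasGenPoly.toReal_toMeasure_ge_eq_integral {μ : PMF ℕ}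
    (hμ : HasGenPoly μ (poissonBinomialGenPoly p)) (τ : ℝ) :
    (μ.toMeasure {n : ℕ | τ ≤ n}).toReal = 1 / 2 + π⁻¹ *
      ∫ t in 0..π, tailIntegrand (poissonBinomialCharFun p) (∑ i, p i + (1 / 2 - ⌈τ⌉)) t := by
  classical
  have hsum := sum_coeff_ge_eq_integral (poissonBinomialGenPoly p) ⌈τ⌉
  rw [eval_one_poissonBinomialGenPoly] at hsum
  rw [hμ.toReal_toMeasure, tailIntegrand_poissonBinomialCharFun, ← hsum]
  refine Finset.sum_congr (Finset.filter_congr fun n _ ↦ ?_) fun _ _ ↦ rfl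
  rw [Set.mem_ofPred_eq, Int.ceil_le, Int.cast_natCast]

end PoissonBinomial

/-! ### Gaussian moments and sine bounds -/

theorem integrableOn_Ioi_mul_exp_neg_mul_sq {b : ℝ} (hb : 0 < b) :
    IntegrableOn (fun t : ℝ ↦ t * Real.exp (-b * t ^ 2)) (Set.Ioi 0) := by
  simpa only [Real.rpow_one] using integrableOn_rpow_mul_exp_neg_mul_sq hb (s := 1) (by norm_num)

theorem integral_Ioi_mul_exp_neg_mul_sq {b : ℝ} (hb : 0 < b) :
    ∫ t in Set.Ioi (0 : ℝ), t * Real.exp (-b * t ^ 2) = (2 * b)⁻¹ := by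
  have h := integral_rpow_mul_exp_neg_mul_rpow (p := 2) (q := 1) two_pos (by norm_num) hb
  norm_num [Real.rpow_neg_one] at h
  simp only [h, neg_mul, mul_inv]
  ring

theorem integrableOn_Ioi_sq_mul_exp_neg_mul_sq {b : ℝ} (hb : 0 < b) :
    IntegrableOn (fun t : ℝ ↦ t ^ 2 * Real.exp (-b * t ^ 2)) (Set.Ioi 0) := by
  simpa only [Real.rpow_two] using integrableOn_rpow_mul_exp_neg_mul_sq hb (s := 2) (by norm_num)

theorem integral_Ioi_sq_mul_exp_neg_mul_sq {b : ℝ} (hb : 0 < b) :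
    ∫ t in Set.Ioi (0 : ℝ), t ^ 2 * Real.exp (-b * t ^ 2) = √π / (4 * (b * √b)) := by
  have h := integral_rpow_mul_exp_neg_mul_rpow (p := 2) (q := 2) two_pos (by norm_num) hb
  simp only [Real.rpow_two] at h
  have hGamma : Real.Gamma ((2 + 1) / 2) = √π / 2 := by
    rw [show ((2 : ℝ) + 1) / 2 = 1 / 2 + 1 by norm_num, Real.Gamma_add_one (by norm_num),
      Real.Gamma_one_half_eq]
    ring
  have hpow : b ^ (-(2 + 1 : ℝ) / 2) = (b * √b)⁻¹ := by
    rw [show (-(2 + 1 : ℝ) / 2) = -(1 + 1 / 2) by norm_num, Real.rpow_neg hb.le,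
      Real.rpow_add hb, Real.rpow_one, ← Real.sqrt_eq_rpow]
  rw [h, hGamma, hpow]
  field_simp
  norm_num

theorem integral_Ioi_sq_mul_exp_le {σ : ℝ} (hσ : 0 < σ) :
    ∫ t in Set.Ioi (0 : ℝ), t ^ 2 * Real.exp (-(25 / 72 * σ ^ 2) * t ^ 2) ≤ 2.17 / σ ^ 3 := by
  have hsqrt : 0.589 * σ ≤ √(25 / 72 * σ ^ 2) :=
    Real.le_sqrt_of_sq_le (by nlinarith [sq_nonneg σ])
  have hsqrt_pi : √π ≤ 1.773 :=
    Real.sqrt_le_iff.2 ⟨by norm_num, by norm_num; linarith [Real.pi_lt_d4]⟩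
  rw [integral_Ioi_sq_mul_exp_neg_mul_sq (by positivity)]
  calc √π / (4 * (25 / 72 * σ ^ 2 * √(25 / 72 * σ ^ 2)))
    _ ≤ 1.773 / (4 * (25 / 72 * σ ^ 2 * (0.589 * σ))) := by gcongr
    _ = 1.773 / (4 * (25 / 72 * 0.589)) / σ ^ 3 := by field_simp
    _ ≤ 2.17 / σ ^ 3 := by gcongr; norm_num

theorem exp_one_half_le : Real.exp (1 / 2) ≤ 1.65 := by
  have hsq : Real.exp (1 / 2) ^ 2 = Real.exp 1 := by rw [← Real.exp_nat_mul]; norm_num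
  nlinarith [Real.exp_one_lt_d9, Real.exp_pos (1 / 2)]

theorem half_mul_one_sub_le_sin_half {t : ℝ} (ht : 0 ≤ t) :
    t / 2 * (1 - t ^ 2 / 24) ≤ Real.sin (t / 2) := by
  linarith [Real.sin_ge_sub_cube (x := t / 2) (by positivity)]

theorem mul_le_sin_half {t : ℝ} (ht : t ∈ Set.Icc 0 2) : 5 / 12 * t ≤ Real.sin (t / 2) := by
  have hsq : t ^ 2 ≤ 4 := by nlinarith [ht.1, ht.2]
  nlinarith [half_mul_one_sub_le_sin_half ht.1, ht.1]

theorem five_sixths_le_sin_half {t : ℝ} (ht : t ∈ Set.Icc 2 π) : 5 / 6 ≤ Real.sin (t / 2) :=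
  calc (5 / 6 : ℝ)
    _ ≤ Real.sin (2 / 2) := by linarith [mul_le_sin_half (t := 2) (by norm_num)]
    _ ≤ Real.sin (t / 2) := Real.sin_le_sin_of_le_of_le_pi_div_two
      (by linarith [Real.pi_pos]) (by linarith [ht.2]) (by linarith [ht.1])

theorem abs_inv_two_mul_sin_half_sub_inv_le {t : ℝ} (ht : t ∈ Set.Ioc 0 2) :
    |(2 * Real.sin (t / 2))⁻¹ - t⁻¹| ≤ t / 20 := by
  have ht₀ := ht.1
  have hmul := mul_le_sin_half ⟨ht₀.le, ht.2⟩
  have hcube := half_mul_one_sub_le_sin_half ht₀.le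
  have hle : 2 * Real.sin (t / 2) ≤ t := by linarith [Real.sin_le (x := t / 2) (by positivity)]
  have hpos : 0 < Real.sin (t / 2) := by linarith
  rw [abs_of_nonneg (sub_nonneg.2 (inv_anti₀ (by positivity) hle)), inv_sub_inv (by positivity)
    ht₀.ne', div_le_div_iff₀ (by positivity) (by norm_num)]
  nlinarith [mul_le_mul_of_nonneg_left hmul (sq_nonneg t)]

theorem abs_tailIntegrand_le {φ : ℝ → ℂ} {t B c : ℝ} (hφ : ‖φ t‖ ≤ B) (hc : 0 < c)
    (hsin : c ≤ Real.sin (t / 2)) (y : ℝ) : |tailIntegrand φ y t| ≤ B / (2 * c) := by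
  have him : |(φ t * Complex.exp (y * t * I)).im| ≤ B := by
    refine (Complex.abs_im_le_norm _).trans ?_
    rwa [norm_mul, ← Complex.ofReal_mul, Complex.norm_exp_ofReal_mul_I, mul_one]
  rw [tailIntegrand, abs_div, abs_of_pos (show 0 < 2 * Real.sin (t / 2) by linarith)]
  gcongr
  exact (abs_nonneg _).trans him

theorem tailIntegrand_sub (φ ψ : ℝ → ℂ) (y t : ℝ) :
    tailIntegrand (φ - ψ) y t = tailIntegrand φ y t - tailIntegrand ψ y t := by
  simp only [tailIntegrand, Pi.sub_apply, sub_mul, Complex.sub_im, sub_div]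

theorem abs_tailIntegrand_ofReal_sub_le (g : ℝ → ℝ) (y : ℝ) {t : ℝ} (ht : t ∈ Set.Ioc 0 2) :
    |tailIntegrand (fun t ↦ g t) y t - g t * (Real.sin (y * t) / t)| ≤ |g t| * (t / 20) := by
  have heq : tailIntegrand (fun t ↦ g t) y t - g t * (Real.sin (y * t) / t) =
      g t * Real.sin (y * t) * ((2 * Real.sin (t / 2))⁻¹ - t⁻¹) := by
    rw [tailIntegrand, Complex.im_ofReal_mul, ← Complex.ofReal_mul, Complex.exp_ofReal_mul_I_im]
    ring
  rw [heq, abs_mul, abs_mul]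
  calc |g t| * |Real.sin (y * t)| * |(2 * Real.sin (t / 2))⁻¹ - t⁻¹|
    _ ≤ |g t| * 1 * (t / 20) := by
      gcongr
      · exact Real.abs_sin_le_one _
      · exact abs_inv_two_mul_sin_half_sub_inv_le ht
    _ = |g t| * (t / 20) := by rw [mul_one]

theorem norm_setIntegral_le_setIntegral_of_subset {α E : Type*} [MeasurableSpace α]
    [NormedAddCommGroup E] [NormedSpace ℝ E] {μ : Measure α} {s u : Set α} (hs : MeasurableSet s)
    (hu : MeasurableSet u) (hsu : s ⊆ u) {f : α → E} {g : α → ℝ} (hg : IntegrableOn g u μ)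
    (hg₀ : ∀ t ∈ u, 0 ≤ g t) (hfg : ∀ t ∈ s, ‖f t‖ ≤ g t) :
    ‖∫ t in s, f t ∂μ‖ ≤ ∫ t in u, g t ∂μ :=
  calc ‖∫ t in s, f t ∂μ‖
    _ ≤ ∫ t in s, g t ∂μ := norm_integral_le_of_norm_le (hg.mono_set hsu)
      ((ae_restrict_iff' hs).2 (.of_forall hfg))
    _ ≤ ∫ t in u, g t ∂μ := setIntegral_mono_set hg
      ((ae_restrict_iff' hu).2 (.of_forall hg₀)) (.of_forall hsu)

theorem abs_integral_Ioi_two_exp_mul_sin_div_le {b : ℝ} (hb : 0 < b) (y : ℝ) :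
    |∫ t in Set.Ioi (2 : ℝ), Real.exp (-b * t ^ 2) * (Real.sin (y * t) / t)| ≤ (8 * b)⁻¹ := by
  have hbound : ∀ t ∈ Set.Ioi (2 : ℝ), |Real.exp (-b * t ^ 2) * (Real.sin (y * t) / t)| ≤
      1 / 4 * (t * Real.exp (-b * t ^ 2)) := fun t (ht : 2 < t) ↦ by
    have hsin : |Real.sin (y * t)| / t ≤ t / 4 := by
      rw [div_le_iff₀ (by linarith)]
      nlinarith [Real.abs_sin_le_one (y * t)]
    rw [abs_mul, abs_div, Real.abs_exp, abs_of_pos (show 0 < t by linarith)]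
    linarith [mul_le_mul_of_nonneg_left hsin (Real.exp_pos (-b * t ^ 2)).le]
  rw [← Real.norm_eq_abs]
  refine (norm_setIntegral_le_setIntegral_of_subset measurableSet_Ioi measurableSet_Ioi
    (Set.Ioi_subset_Ioi zero_le_two) ((integrableOn_Ioi_mul_exp_neg_mul_sq hb).const_mul _)
    (fun t (ht : 0 < t) ↦ by positivity) hbound).trans_eq ?_
  rw [integral_const_mul, integral_Ioi_mul_exp_neg_mul_sq hb]
  field_simp
  norm_num

/-! ### Comparison of the inversion integrals -/

section Comparison
variable {ι : Type*} [Fintype ι] {p : ι → ℝ} {σ : ℝ}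

theorem abs_tailIntegrand_poissonBinomialCharFun_sub_le (hp : ∀ i, p i ∈ Set.Icc 0 1)
    (hvar : σ ^ 2 = ∑ i, p i * (1 - p i)) (y : ℝ) {t : ℝ} (ht : t ∈ Set.Ioc 0 2) :
    |tailIntegrand (poissonBinomialCharFun p) y t -
        Real.exp (-(σ ^ 2 / 2) * t ^ 2) * (Real.sin (y * t) / t)| ≤
      Real.exp (1 / 2) * σ ^ 2 / 5 * (t ^ 2 * Real.exp (-(25 / 72 * σ ^ 2) * t ^ 2)) +
        1 / 20 * (t * Real.exp (-(σ ^ 2 / 2) * t ^ 2)) := by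
  have ht₀ := ht.1
  have hsin := mul_le_sin_half ⟨ht₀.le, ht.2⟩
  set ψ : ℝ → ℝ := fun t ↦ Real.exp (-(σ ^ 2 / 2) * t ^ 2) with hψ
  -- `25/72 = 2 (5/12)²`, from `sin (t/2) ≥ 5t/12`
  have hchar : ‖(poissonBinomialCharFun p - fun t ↦ (ψ t : ℂ)) t‖ ≤
      Real.exp (1 / 2) * (σ ^ 2 * (t ^ 3 / 6)) * Real.exp (-(25 / 72 * σ ^ 2) * t ^ 2) := by
    refine (hvar ▸ norm_poissonBinomialCharFun_sub_exp_le hp ⟨ht₀.le, by linarith [ht.2]⟩).trans ?_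
    gcongr
    nlinarith [mul_le_mul_of_nonneg_left (pow_le_pow_left₀ (by positivity) hsin 2) (sq_nonneg σ)]
  have hdiff := abs_tailIntegrand_le hchar (by positivity) hsin y
  rw [tailIntegrand_sub] at hdiff
  refine (abs_sub_le _ (tailIntegrand (fun t ↦ (ψ t : ℂ)) y t) _).trans (add_le_add
    (hdiff.trans_eq ?_) ((abs_tailIntegrand_ofReal_sub_le ψ y ht).trans_eq ?_))
  · field_simp
    ring
  · rw [hψ, Real.abs_exp]
    ring

theorem abs_integral_zero_two_tailIntegrand_sub_le (hp : ∀ i, p i ∈ Set.Icc 0 1) (hσ : 0 < σ)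
    (hvar : σ ^ 2 = ∑ i, p i * (1 - p i)) (y : ℝ) :
    |∫ t in 0..2, (tailIntegrand (poissonBinomialCharFun p) y t -
        Real.exp (-(σ ^ 2 / 2) * t ^ 2) * (Real.sin (y * t) / t))| ≤
      0.7162 / σ + 0.05 / σ ^ 2 := by
  have hint₂ : IntegrableOn (fun t ↦ Real.exp (1 / 2) * σ ^ 2 / 5 *
      (t ^ 2 * Real.exp (-(25 / 72 * σ ^ 2) * t ^ 2))) (Set.Ioi 0) :=
    (integrableOn_Ioi_sq_mul_exp_neg_mul_sq (by positivity)).const_mul _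
  have hint₁ : IntegrableOn (fun t ↦ 1 / 20 * (t * Real.exp (-(σ ^ 2 / 2) * t ^ 2)))
      (Set.Ioi 0) :=
    (integrableOn_Ioi_mul_exp_neg_mul_sq (by positivity)).const_mul _
  rw [intervalIntegral.integral_of_le zero_le_two, ← Real.norm_eq_abs]
  refine (norm_setIntegral_le_setIntegral_of_subset measurableSet_Ioc measurableSet_Ioi
    Set.Ioc_subset_Ioi_self (hint₂.add hint₁) (fun t (ht : 0 < t) ↦ ?_) fun t ht ↦
    abs_tailIntegrand_poissonBinomialCharFun_sub_le hp hvar y ht).trans ?_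
  · simp only [Pi.add_apply]
    positivity
  simp only [Pi.add_apply]
  rw [integral_add hint₂ hint₁, integral_const_mul, integral_const_mul,
    integral_Ioi_mul_exp_neg_mul_sq (by positivity)]
  gcongr ?_ + ?_
  · calc _ ≤ 1.65 * σ ^ 2 / 5 * (2.17 / σ ^ 3) := by
          gcongr
          · exact exp_one_half_le
          · exact integral_Ioi_sq_mul_exp_le hσ
      _ ≤ 0.7162 / σ := by
          field_simp
          norm_num
  · field_simp
    norm_num

theorem abs_integral_two_pi_tailIntegrand_le (hσ : 0 < σ)
    (hvar : σ ^ 2 = ∑ i, p i * (1 - p i)) (y : ℝ) :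
    |∫ t in 2..π, tailIntegrand (poissonBinomialCharFun p) y t| ≤ 0.31 / σ := by
  have hpi : 2 ≤ π := Real.two_le_pi
  -- `25/18 = 2 (5/6)²`, from `sin (t/2) ≥ 5/6` on `[2, π]`
  have hexp : Real.exp (-(25 / 18 * σ ^ 2)) ≤ 0.43 / σ := by
    rw [Real.exp_neg, inv_eq_one_div, div_le_div_iff₀ (Real.exp_pos _) hσ]
    nlinarith [Real.add_one_le_exp (25 / 18 * σ ^ 2), sq_nonneg (σ - 0.85)]
  have hbound : ∀ t ∈ Set.uIoc 2 π,
      |tailIntegrand (poissonBinomialCharFun p) y t| ≤ 0.43 / σ / (2 * (5 / 6)) := fun t ht ↦ by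
    rw [Set.uIoc_of_le hpi] at ht
    have hsin := five_sixths_le_sin_half ⟨ht.1.le, ht.2⟩
    refine abs_tailIntegrand_le ?_ (by norm_num) hsin y
    refine ((hvar ▸ norm_poissonBinomialCharFun_le p t).trans (Real.exp_le_exp.2 ?_)).trans hexp
    nlinarith [mul_le_mul_of_nonneg_left (pow_le_pow_left₀ (by norm_num) hsin 2) (sq_nonneg σ)]
  calc |∫ t in 2..π, tailIntegrand (poissonBinomialCharFun p) y t|
    _ ≤ 0.43 / σ / (2 * (5 / 6)) * |π - 2| :=
      (Real.norm_eq_abs _).symm.trans_le <|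
        intervalIntegral.norm_integral_le_of_norm_le_const hbound
    _ ≤ 0.43 / σ / (2 * (5 / 6)) * 1.1416 := by
      rw [abs_of_nonneg (sub_nonneg.2 hpi)]
      gcongr
      linarith [Real.pi_lt_d4]
    _ = 0.43 / (2 * (5 / 6)) * 1.1416 / σ := by ring
    _ ≤ 0.31 / σ := by gcongr; norm_num

theorem abs_integral_tailIntegrand_sub_integral_le (hp : ∀ i, p i ∈ Set.Icc 0 1) (hσ : 0.7 ≤ σ)
    (hvar : σ ^ 2 = ∑ i, p i * (1 - p i)) {y : ℝ}
    (hint : IntervalIntegrable (tailIntegrand (poissonBinomialCharFun p) y) volume 0 π) :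
    |(∫ t in 0..π, tailIntegrand (poissonBinomialCharFun p) y t) -
        ∫ t in Set.Ioi (0 : ℝ), Real.exp (-(σ ^ 2 / 2) * t ^ 2) * (Real.sin (y * t) / t)| ≤
      1.5 / σ := by
  have hσ₀ : 0 < σ := by linarith
  have htwo : (2 : ℝ) ∈ Set.uIcc 0 π := by
    rw [Set.uIcc_of_le Real.pi_pos.le]
    exact ⟨zero_le_two, Real.two_le_pi⟩
  have hleft := hint.mono_set (Set.uIcc_subset_uIcc_left htwo)
  have hright := hint.mono_set (Set.uIcc_subset_uIcc_right htwo)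
  have hgauss := integrable_exp_neg_mul_sq_mul_sin_div (b := σ ^ 2 / 2) (by positivity) y
  rw [← intervalIntegral.integral_add_adjacent_intervals hleft hright,
    ← intervalIntegral.integral_interval_add_Ioi hgauss.integrableOn
      (b := 2) hgauss.integrableOn, add_sub_add_comm,
    ← intervalIntegral.integral_sub hleft hgauss.intervalIntegrable]
  have hnear := abs_integral_zero_two_tailIntegrand_sub_le hp hσ₀ hvar y
  have hmid := abs_integral_two_pi_tailIntegrand_le hσ₀ hvar y
  have htail := abs_integral_Ioi_two_exp_mul_sin_div_le (b := σ ^ 2 / 2) (by positivity) y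
  refine (abs_add_le _ _).trans ((add_le_add hnear ((abs_sub _ _).trans
    (add_le_add hmid htail))).trans ?_)
  calc 0.7162 / σ + 0.05 / σ ^ 2 + (0.31 / σ + (8 * (σ ^ 2 / 2))⁻¹)
    _ = (1.0262 + 0.3 / σ) / σ := by ring
    _ ≤ (1.0262 + 0.3 / 0.7) / σ := by gcongr
    _ ≤ 1.5 / σ := by gcongr; norm_num

end Comparison

theorem abs_toReal_toMeasure_sub_stdNormalCDF_le_one (μ : PMF ℕ) (s : Set ℕ) (x : ℝ) :
    |(μ.toMeasure s).toReal - stdNormalCDF x| ≤ 1 := by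
  obtain ⟨hΦ₀, hΦ₁⟩ := stdNormalCDF_mem_Icc x
  have hμ₀ : 0 ≤ (μ.toMeasure s).toReal := ENNReal.toReal_nonneg
  have hμ₁ : (μ.toMeasure s).toReal ≤ 1 := measureReal_le_one
  exact abs_le.2 ⟨by linarith, by linarith⟩

theorem HasGenPoly.abs_toReal_toMeasure_ge_sub_stdNormalCDF_le {ι : Type*} [Fintype ι] {p : ι → ℝ}
    (hp : ∀ i, p i ∈ Set.Icc 0 1) {μ : PMF ℕ} (hμ : HasGenPoly μ (poissonBinomialGenPoly p))
    {σ : ℝ} (hσ : 0 < σ) (hvar : σ ^ 2 = ∑ i, p i * (1 - p i)) (τ : ℝ) :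
    |(μ.toMeasure {n : ℕ | τ ≤ n}).toReal - stdNormalCDF ((∑ i, p i - τ) / σ)| ≤ 0.7 / σ := by
  rcases le_total σ 0.7 with hsmall | hlarge
  · exact (abs_toReal_toMeasure_sub_stdNormalCDF_le_one μ _ _).trans ((one_le_div hσ).2 hsmall)
  set y : ℝ := ∑ i, p i + (1 / 2 - ⌈τ⌉) with hy
  have hfourier : |(μ.toMeasure {n : ℕ | τ ≤ n}).toReal - stdNormalCDF (y / σ)| ≤ 0.5 / σ := by
    rw [hμ.toReal_toMeasure_ge_eq_integral p τ, stdNormalCDF_div_eq_integral hσ,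
      add_sub_add_left_eq_sub, ← mul_sub, abs_mul, abs_of_pos (inv_pos.2 Real.pi_pos)]
    calc _ ≤ 3⁻¹ * (1.5 / σ) := by
          gcongr
          · exact Real.pi_gt_three.le
          · exact abs_integral_tailIntegrand_sub_integral_le hp hlarge hvar
              (intervalIntegrable_tailIntegrand_poissonBinomialCharFun p ⌈τ⌉)
      _ = 0.5 / σ := by ring
  have hshift : |y / σ - (∑ i, p i - τ) / σ| ≤ 1 / 2 / σ := by
    rw [← sub_div, abs_div, abs_of_pos hσ]
    gcongr
    exact abs_le.2 ⟨by linarith [Int.ceil_lt_add_one τ], by linarith [Int.le_ceil τ]⟩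
  calc |(μ.toMeasure {n : ℕ | τ ≤ n}).toReal - stdNormalCDF ((∑ i, p i - τ) / σ)|
    _ ≤ 0.5 / σ + 2 / 5 * (1 / 2 / σ) := (abs_sub_le _ (stdNormalCDF (y / σ)) _).trans <|
      add_le_add hfourier ((abs_stdNormalCDF_sub_le _ _).trans (by gcongr))
    _ = 0.7 / σ := by ring

theorem mix_mul_one_sub_pos {p q θ : ℝ} (hp : p ∈ Set.Ioo 0 1) (hq : q ∈ Set.Ioo 0 1)
    (hθ : θ ∈ Set.Icc 0 1) : 0 < p * (1 - p) * θ + q * (1 - q) * (1 - θ) := by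
  have hpp := mul_pos hp.1 (sub_pos.2 hp.2)
  have hqq := mul_pos hq.1 (sub_pos.2 hq.2)
  rcases hθ.1.eq_or_lt with rfl | hθ₀
  · simpa using hqq
  · exact add_pos_of_pos_of_nonneg (mul_pos hpp hθ₀) (mul_nonneg hqq.le (sub_nonneg.2 hθ.2))

theorem abs_poissonBinomial_ge_sub_stdNormalCDF_le {p q : ℝ} (hp : p ∈ Set.Icc 0 1)
    (hq : q ∈ Set.Icc 0 1) (m k : ℕ) {σ : ℝ} (hσ : 0 < σ)
    (hvar : σ ^ 2 = m * (p * (1 - p)) + k * (q * (1 - q))) (τ : ℝ) :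
    |((poissonBinomial (ENNReal.ofReal p) (ENNReal.ofReal q) (ENNReal.ofReal_le_one.2 hp.2)
        (ENNReal.ofReal_le_one.2 hq.2) m k).toMeasure {n : ℕ | τ ≤ n}).toReal -
      stdNormalCDF ((m * p + k * q - τ) / σ)| ≤ 0.7 / σ := by
  have h := (hasGenPoly_poissonBinomial hp hq m k).abs_toReal_toMeasure_ge_sub_stdNormalCDF_le
    (Sum.forall.2 ⟨fun _ ↦ hp, fun _ ↦ hq⟩) hσ (by simpa [Fintype.sum_sum_type] using hvar) τ
  simpa [Fintype.sum_sum_type] using h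

theorem poissonBinomial_tail_normal_approx_general {m n : ℕ} (hn : 0 < n) (hm : m ≤ n)
    {p q : ℝ} (hp : p ∈ Set.Ioo 0 1) (hq : q ∈ Set.Ioo 0 1) (γ : ℝ) :
    |((poissonBinomial (ENNReal.ofReal p) (ENNReal.ofReal q) (ENNReal.ofReal_le_one.2 hp.2.le)
        (ENNReal.ofReal_le_one.2 hq.2.le) m (n - m)).toMeasure
          {j : ℕ | n * (γ * p + (1 - γ) * q) ≤ j}).toReal -
      stdNormalCDF (√n * (p - q) * (m / n - γ) /
        √(p * (1 - p) * (m / n) + q * (1 - q) * (1 - m / n)))| ≤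
      0.7 / (√n * √(p * (1 - p) * (m / n) + q * (1 - q) * (1 - m / n))) := by
  have hn₀ : (0 : ℝ) < n := Nat.cast_pos.2 hn
  have hsq : √(n : ℝ) ^ 2 = n := Real.sq_sqrt hn₀.le
  set θ : ℝ := m / n with hθ
  set w : ℝ := p * (1 - p) * θ + q * (1 - q) * (1 - θ) with hw
  have hw₀ : 0 < w := mix_mul_one_sub_pos hp hq
    ⟨by positivity, div_le_one_of_le₀ (Nat.cast_le.2 hm) hn₀.le⟩
  have hmθ : (m : ℝ) = n * θ := by rw [hθ]; field_simp
  have hcompl : ((n - m : ℕ) : ℝ) = n * (1 - θ) := by rw [Nat.cast_sub hm, hmθ]; ring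
  have hvar : (√n * √w) ^ 2 = m * (p * (1 - p)) + (n - m : ℕ) * (q * (1 - q)) := by
    rw [mul_pow, hsq, Real.sq_sqrt hw₀.le, hcompl, hmθ, hw]
    ring
  have harg : √n * (p - q) * (θ - γ) / √w =
      (m * p + (n - m : ℕ) * q - n * (γ * p + (1 - γ) * q)) / (√n * √w) := by
    rw [hcompl, hmθ, div_eq_div_iff (by positivity) (by positivity)]
    linear_combination (p - q) * (θ - γ) * √w * hsq
  rw [harg]
  exact abs_poissonBinomial_ge_sub_stdNormalCDF_le ⟨hp.1.le, hp.2.le⟩ ⟨hq.1.le, hq.2.le⟩ m (n - m)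
    (by positivity) hvar _

end

/-- Normal approximation (with Berry–Esseen constant `0.7915`) of the tail
probability `U = P(X ≥ r²(γp + (1−γ)q))` of the Poisson binomial variable `X` with `a·a'`
Bernoulli(`p`) and `r² − a·a'` Bernoulli(`q`) summands, written in terms of
`θ = a·a'/r²`. -/
theorem poissonBinomial_tail_normal_approx
    (r : ℕ) (hr : 0 < r)
    (p q : ℝ) (hp0 : 0 < p) (hp1 : p < 1) (hq0 : 0 < q) (hq1 : q < 1)
    (K : ℕ) (a a' : Fin K → ℕ)
    (hm : ∑ k, a k * a' k ≤ r ^ 2)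
    (γ : ℝ) (hγ0 : 0 ≤ γ) (hγ1 : γ ≤ 1) :
    |((poissonBinomial (ENNReal.ofReal p) (ENNReal.ofReal q)
          (ENNReal.ofReal_le_one.mpr hp1.le) (ENNReal.ofReal_le_one.mpr hq1.le)
          (∑ k, a k * a' k) (r ^ 2 - ∑ k, a k * a' k)).toMeasure
        {n : ℕ | (r : ℝ) ^ 2 * (γ * p + (1 - γ) * q) ≤ (n : ℝ)}).toReal -
      stdNormalCDF ((r : ℝ) * (p - q) * (((∑ k, a k * a' k : ℕ) : ℝ) / (r : ℝ) ^ 2 - γ) /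
        Real.sqrt (p * (1 - p) * (((∑ k, a k * a' k : ℕ) : ℝ) / (r : ℝ) ^ 2) +
          q * (1 - q) * (1 - ((∑ k, a k * a' k : ℕ) : ℝ) / (r : ℝ) ^ 2)))| ≤
      0.7915 / ((r : ℝ) *
        Real.sqrt (p * (1 - p) * (((∑ k, a k * a' k : ℕ) : ℝ) / (r : ℝ) ^ 2) +
          q * (1 - q) * (1 - ((∑ k, a k * a' k : ℕ) : ℝ) / (r : ℝ) ^ 2))) := by
  have h := poissonBinomial_tail_normal_approx_general (pow_pos hr 2) hm ⟨hp0, hp1⟩ ⟨hq0, hq1⟩ γ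
  rw [Nat.cast_pow, Real.sqrt_sq (Nat.cast_nonneg r)] at h
  exact h.trans (by gcongr; norm_num)
end
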